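/- arXiv:0707.3609 — 2 statements merged into one kernel-verified Lean document; each statement's English description precedes it below -/
import Mathlib

section
/- Let X be a length space and Λ(X) its group of ρ-loops at a basepoint under cancelled concatenation, with metric d(c₁,c₂)=L(c₁)+L(c₂)−2L(c₁∧c₂). Then Λ(X) is a complete metric space: if (cᵢ) is Cauchy in Λ(X), the lengths L(cᵢ) converge to some L ≥ 0, the loops stabilize on every interval [0,L′] with L′ < L, and the limit loop defined by these stable values belongs to Λ(X). -/
open Set

/-- An arclength-parameterized weakly normal rectifiable path (ρ-path) in a metric
space `X`.  The path is defined on `[0, len]`, extended constantly outside. -/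
structure RPath (X : Type*) [MetricSpace X] where
  /-- the length of the path -/
  len : ℝ
  len_nonneg : 0 ≤ len
  toFun : ℝ → X
  contOn : ContinuousOn toFun (Icc 0 len)
  /-- arclength parameterization: the length of the restriction to `[s,t]` is `t - s`. -/
  arclength : ∀ s t : ℝ, 0 ≤ s → s ≤ t → t ≤ len →
    eVariationOn toFun (Icc s t) = ENNReal.ofReal (t - s)
  clamp_left : ∀ t : ℝ, t ≤ 0 → toFun t = toFun 0
  clamp_right : ∀ t : ℝ, len ≤ t → toFun t = toFun len
  /-- weak normality: no nontrivial subsegment `[u,v]` with equal endpoints is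
  null-homotopic in its own image rel endpoints. -/
  weaklyNormal : ¬ ∃ u v : ℝ, 0 ≤ u ∧ u < v ∧ v ≤ len ∧ toFun u = toFun v ∧
    ∃ H : ℝ × ℝ → X, ContinuousOn H (Icc u v ×ˢ Icc 0 1) ∧
      (∀ t ∈ Icc u v, H (t, 0) = toFun t) ∧
      (∀ t ∈ Icc u v, H (t, 1) = toFun u) ∧
      (∀ s ∈ Icc (0:ℝ) 1, H (u, s) = toFun u ∧ H (v, s) = toFun v) ∧
      (∀ p ∈ Icc u v ×ˢ Icc (0:ℝ) 1, H p ∈ toFun '' Icc u v)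

namespace RPath

variable {X : Type*} [MetricSpace X]

/-- `c` starts at the point `p`. -/
def StartsAt (c : RPath X) (p : X) : Prop := c.toFun 0 = p

/-- `c` ends at the point `p`. -/
def EndsAt (c : RPath X) (p : X) : Prop := c.toFun c.len = p

/-- The length `L(c₁ ∧ c₂)` of the longest common initial segment of two paths. -/
noncomputable def wedgeLen (c₁ c₂ : RPath X) : ℝ :=
  sSup {b : ℝ | 0 ≤ b ∧ b ≤ c₁.len ∧ b ≤ c₂.len ∧ ∀ t ∈ Icc 0 b, c₁.toFun t = c₂.toFun t}

/-- The distance `d(c₁,c₂) = L(c₁) + L(c₂) - 2 L(c₁ ∧ c₂)`. -/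
noncomputable def rhoDist (c₁ c₂ : RPath X) : ℝ :=
  c₁.len + c₂.len - 2 * wedgeLen c₁ c₂

end RPath

/-- A length space: a metric space with at least two points in which any two points
are joined by paths of length arbitrarily close to the distance between them. -/
def IsLengthSpace (X : Type*) [MetricSpace X] : Prop :=
  (∃ x y : X, x ≠ y) ∧
  ∀ x y : X, ∀ ε : ℝ, 0 < ε → ∃ (c : ℝ → X) (b : ℝ), 0 ≤ b ∧
    ContinuousOn c (Icc 0 b) ∧ c 0 = x ∧ c b = y ∧
    eVariationOn c (Icc 0 b) < ENNReal.ofReal (dist x y + ε)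

open Filter

theorem rho_log_const {C : Set (ℝ × ℝ)} (hC : IsPreconnected C) {P : ℝ × ℝ → ℂ}
    (hP : ContinuousOn P C) {a : ℂ} (h : ∀ z ∈ C, Complex.exp (P z) = a)
    {z w : ℝ × ℝ} (hz : z ∈ C) (hw : w ∈ C) : P z = P w := by
  refine Complex.isCoveringMap_exp.constOn_of_comp hC hP ?_ hz hw
  intro x hx y hy
  exact Subtype.ext ((h x hx).trans (h y hy).symm)

theorem rho_planar (F : ℝ × ℝ → ℂ) (hF : Continuous F) (h0 : ∀ z, F z ≠ 0)
    {K₁ K₂ A B : Set (ℝ × ℝ)} (hK₁ : IsPreconnected K₁) (hK₂ : IsPreconnected K₂)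
    (hA : IsPreconnected A) (hB : IsPreconnected B)
    {z₁ z₂ w₁ w₂ : ℝ × ℝ} (hz₁K : z₁ ∈ K₁) (hw₁K : w₁ ∈ K₁) (hz₂K : z₂ ∈ K₂) (hw₂K : w₂ ∈ K₂)
    (hz₁A : z₁ ∈ A) (hz₂A : z₂ ∈ A) (hw₁B : w₁ ∈ B) (hw₂B : w₂ ∈ B)
    (h1 : ∀ z ∈ K₁, 0 < (F z).re) (h2 : ∀ z ∈ K₂, (F z).re < 0)
    (h3 : ∀ z ∈ A, (F z).re = 0 → 0 < (F z).im)
    (h4 : ∀ z ∈ B, (F z).re = 0 → (F z).im < 0) : False := by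
  obtain ⟨l, ⟨-, hl⟩, -⟩ := Complex.isCoveringMapOn_exp.existsUnique_continuousMap_lifts
    (⟨F, hF⟩ : C(ℝ × ℝ, ℂ)) (a₀ := 0) (Complex.exp_log (h0 0)) (fun x => h0 x)
  have hl' : ∀ z, Complex.exp (l z) = F z := fun z => congrFun hl z
  have key : ∀ (c : ℂ), c ≠ 0 → ∀ C : Set (ℝ × ℝ), IsPreconnected C →
      (∀ z ∈ C, c * F z ∈ Complex.slitPlane) → ∀ z ∈ C, ∀ w ∈ C,
      l z - Complex.log (c * F z) = l w - Complex.log (c * F w) := by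
    intro c hc C hC hs z hz w hw
    refine rho_log_const (P := fun z => l z - Complex.log (c * F z)) (a := c⁻¹) hC ?_ ?_ hz hw
    · refine l.continuous.continuousOn.sub (ContinuousOn.clog ?_ hs)
      fun_prop
    · intro x hx
      rw [Complex.exp_sub, hl', Complex.exp_log (mul_ne_zero hc (h0 x))]
      field_simp [h0 x]
  have hI : (-Complex.I) ≠ 0 := by simp
  have e1 := key (-Complex.I) hI K₁ hK₁ (fun z hz => by
    rw [Complex.mem_slitPlane_iff]; right; simpa using (h1 z hz).ne') _ hz₁K _ hw₁K
  have e2 := key (-Complex.I) hI K₂ hK₂ (fun z hz => by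
    rw [Complex.mem_slitPlane_iff]; right; simpa using (h2 z hz).ne) _ hz₂K _ hw₂K
  have e3 := key (-Complex.I) hI A hA (fun z hz => by
    rw [Complex.mem_slitPlane_iff]
    by_cases h : (F z).re = 0
    · left; simpa using h3 z hz h
    · right; simpa using h) _ hz₁A _ hz₂A
  have e4 := key (Complex.I) Complex.I_ne_zero B hB (fun z hz => by
    rw [Complex.mem_slitPlane_iff]
    by_cases h : (F z).re = 0
    · left; simpa using h4 z hz h
    · right; simpa using h) _ hw₁B _ hw₂B
  have e5 : Complex.log (-Complex.I * F w₁) - Complex.log (Complex.I * F w₁)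
      = Complex.log (-Complex.I * F w₂) - Complex.log (Complex.I * F w₂) := by
    linear_combination e1 + e3.symm + e2.symm + e4
  have e6 := congrArg Complex.im e5
  have a1 : 0 < (Complex.I * F w₁).im := by simpa using h1 _ hw₁K
  have a2 : (Complex.I * F w₂).im < 0 := by simpa using h2 _ hw₂K
  rw [neg_mul, neg_mul, Complex.sub_im, Complex.sub_im, Complex.log_im, Complex.log_im,
    Complex.log_im, Complex.log_im, Complex.arg_neg_eq_arg_sub_pi_of_im_pos a1,
    Complex.arg_neg_eq_arg_add_pi_of_im_neg a2] at e6
  linarith [Real.pi_pos]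

theorem rho_split {Y : Type*} [TopologicalSpace Y] [T2Space Y] {E A B : Set Y}
    (hE : IsCompact E) (hA : IsClosed A) (hB : IsClosed B)
    (h : ∀ C ⊆ E, IsPreconnected C → ∀ a ∈ C, ∀ b ∈ C, a ∈ A → b ∉ B) :
    ∃ E₁ E₂ : Set Y, IsClosed E₁ ∧ IsClosed E₂ ∧ Disjoint E₁ E₂ ∧ E = E₁ ∪ E₂ ∧
      E ∩ A ⊆ E₁ ∧ E ∩ B ⊆ E₂ := by
  have : CompactSpace E := isCompact_iff_compactSpace.1 hE
  let A' : Set E := Subtype.val ⁻¹' A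
  let B' : Set E := Subtype.val ⁻¹' B
  have hA' : IsCompact A' := (hA.preimage continuous_subtype_val).isCompact
  have hB' : IsCompact B' := (hB.preimage continuous_subtype_val).isCompact
  have pt : ∀ a ∈ A', ∀ b ∈ B', ∃ Z : Set E, IsClopen Z ∧ a ∈ Z ∧ b ∉ Z := by
    intro a ha b hb
    have hn : b ∉ connectedComponent a := by
      intro hb'
      refine h (Subtype.val '' connectedComponent a) ?_ ?_ a ?_ b ?_ ha hb
      · rintro _ ⟨x, -, rfl⟩; exact x.2
      · exact isPreconnected_connectedComponent.image _ continuous_subtype_val.continuousOn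
      · exact ⟨a, mem_connectedComponent, rfl⟩
      · exact ⟨b, hb', rfl⟩
    rw [connectedComponent_eq_iInter_isClopen] at hn
    simp only [mem_iInter, not_forall] at hn
    obtain ⟨⟨Z, hZ, haZ⟩, hbZ⟩ := hn
    exact ⟨Z, hZ, haZ, hbZ⟩
  have st : ∀ a ∈ A', ∃ Z : Set E, IsClopen Z ∧ a ∈ Z ∧ Disjoint B' Z := by
    intro a ha
    refine hB'.induction_on (p := fun s => ∃ Z : Set E, IsClopen Z ∧ a ∈ Z ∧ Disjoint s Z)
      ⟨univ, isClopen_univ, mem_univ _, by simp⟩ ?_ ?_ ?_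
    · rintro s t hst ⟨Z, h1, h2, h3⟩
      exact ⟨Z, h1, h2, h3.mono_left hst⟩
    · rintro s t ⟨Z, h1, h2, h3⟩ ⟨Z', h1', h2', h3'⟩
      refine ⟨Z ∩ Z', h1.inter h1', ⟨h2, h2'⟩, ?_⟩
      exact Disjoint.union_left (h3.mono_right inter_subset_left)
        (h3'.mono_right inter_subset_right)
    · intro b hb
      obtain ⟨Z, h1, h2, h3⟩ := pt a ha b hb
      exact ⟨Zᶜ, mem_nhdsWithin_of_mem_nhds (h1.compl.isOpen.mem_nhds h3), Z, h1, h2,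
        disjoint_compl_left⟩
  obtain ⟨Z, hZ, hAZ, hBZ⟩ : ∃ Z : Set E, IsClopen Z ∧ A' ⊆ Z ∧ Disjoint B' Z := by
    refine hA'.induction_on (p := fun s => ∃ Z : Set E, IsClopen Z ∧ s ⊆ Z ∧ Disjoint B' Z)
      ⟨∅, isClopen_empty, by simp, by simp⟩ ?_ ?_ ?_
    · rintro s t hst ⟨Z, h1, h2, h3⟩
      exact ⟨Z, h1, hst.trans h2, h3⟩
    · rintro s t ⟨Z, h1, h2, h3⟩ ⟨Z', h1', h2', h3'⟩
      exact ⟨Z ∪ Z', h1.union h1', union_subset_union h2 h2', h3.union_right h3'⟩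
    · intro a ha
      obtain ⟨Z, h1, h2, h3⟩ := st a ha
      exact ⟨Z, mem_nhdsWithin_of_mem_nhds (h1.isOpen.mem_nhds h2), Z, h1, subset_rfl, h3⟩
  have hcl : Topology.IsClosedEmbedding (Subtype.val : E → Y) := hE.isClosed.isClosedEmbedding_subtypeVal
  refine ⟨Subtype.val '' Z, Subtype.val '' Zᶜ, hcl.isClosedMap _ hZ.isClosed,
    hcl.isClosedMap _ hZ.compl.isClosed, ?_, ?_, ?_, ?_⟩
  · exact (disjoint_image_iff Subtype.val_injective).2 disjoint_compl_right
  · rw [← image_union, union_compl_self, image_univ, Subtype.range_coe]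
  · rintro x ⟨hx, hxA⟩
    exact ⟨⟨x, hx⟩, hAZ hxA, rfl⟩
  · rintro x ⟨hx, hxB⟩
    exact ⟨⟨x, hx⟩, fun hz => disjoint_left.1 hBZ (show (⟨x, hx⟩ : E) ∈ B' from hxB) hz, rfl⟩

open MeasureTheory in
theorem rho_exists_radius {X : Type*} [MetricSpace X] {f : ℝ → X} {u v : ℝ}
    (hf : LipschitzOnWith 1 f (Icc u v)) (p : X) {ρ : ℝ} (hρ : 0 < ρ) :
    ∃ r, 0 < r ∧ r < ρ ∧ ∀ C ⊆ f '' Icc u v, IsPreconnected C → (∀ y ∈ C, dist y p = r) →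
      C.Subsingleton := by
  borelize X
  let S := f '' Icc u v
  have hS : IsCompact S := isCompact_Icc.image_of_continuousOn hf.continuousOn
  let As : ℝ → Set X := fun r => S ∩ {y | dist y p = r}
  have hcount : Set.Countable {r : ℝ | 0 < (Measure.hausdorffMeasure 1 : Measure X) (As r)} := by
    apply Measure.countable_meas_pos_of_disjoint_of_meas_iUnion_ne_top
    · intro r
      exact hS.measurableSet.inter (isClosed_eq (by fun_prop) (by fun_prop)).measurableSet
    · intro r r' hrr
      rw [Function.onFun, disjoint_left]
      rintro x ⟨-, hx⟩ ⟨-, hx'⟩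
      exact hrr (hx.symm.trans hx')
    · have h1 : (Measure.hausdorffMeasure 1 : Measure X) (⋃ r, As r) ≤
        (Measure.hausdorffMeasure 1 : Measure X) S :=
        measure_mono (iUnion_subset fun r => inter_subset_left)
      have h2 := hf.hausdorffMeasure_image_le (d := 1) zero_le_one
      rw [hausdorffMeasure_real] at h2
      refine ((h1.trans h2).trans_lt ?_).ne
      simp [ENNReal.ofReal_lt_top]
  have hunc : ¬ (Ioo 0 ρ).Countable := by
    intro h
    have := h.measure_zero volume
    simp at this
    linarith
  obtain ⟨r, hr, hr0⟩ : ∃ r ∈ Ioo 0 ρ, r ∉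
      {r : ℝ | 0 < (Measure.hausdorffMeasure 1 : Measure X) (As r)} := by
    by_contra! hcon
    exact hunc (hcount.mono hcon)
  refine ⟨r, hr.1, hr.2, fun C hCS hC hd x hx y hy => ?_⟩
  by_contra hxy
  have hz : (Measure.hausdorffMeasure 1 : Measure X) C = 0 := by
    have : (Measure.hausdorffMeasure 1 : Measure X) (As r) = 0 := by
      simpa using hr0
    have hsub : C ⊆ As r := fun z hz => ⟨hCS hz, hd z hz⟩
    exact measure_mono_null hsub this
  have hL : LipschitzWith 1 (fun z : X => dist z x) := LipschitzWith.dist_left x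
  have h2 := hL.hausdorffMeasure_image_le (d := 1) zero_le_one C
  rw [hz, hausdorffMeasure_real] at h2
  have hsub : Icc (dist x x) (dist y x) ⊆ (fun z : X => dist z x) '' C :=
    hC.intermediate_value hx hy hL.continuous.continuousOn
  have h3 := (measure_mono hsub).trans h2
  simp at h3
  exact hxy h3.symm

/-- Two bottom points of the rectangle are related when a connected subset of a fibre of `H`
joins them. -/
def RhoRel {X : Type*} (H : ℝ × ℝ → X) (u v s s' : ℝ) : Prop :=
  ∃ C ⊆ Icc u v ×ˢ Icc (0:ℝ) 1, IsPreconnected C ∧ (s, (0:ℝ)) ∈ C ∧ (s', (0:ℝ)) ∈ C ∧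
    ∀ z ∈ C, H z = H (s, 0)

theorem RhoRel.mem {X : Type*} {H : ℝ × ℝ → X} {u v s s' : ℝ} (h : RhoRel H u v s s') :
    s ∈ Icc u v ∧ s' ∈ Icc u v := by
  obtain ⟨C, hC, -, h1, h2, -⟩ := h
  exact ⟨(hC h1).1, (hC h2).1⟩

theorem RhoRel.eq {X : Type*} {H : ℝ × ℝ → X} {u v s s' : ℝ} (h : RhoRel H u v s s') :
    H (s, 0) = H (s', 0) := by
  obtain ⟨C, hC, -, h1, h2, h3⟩ := h
  exact (h3 _ h2).symm

theorem RhoRel.rfl' {X : Type*} {H : ℝ × ℝ → X} {u v s : ℝ} (h : s ∈ Icc u v) :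
    RhoRel H u v s s := by
  refine ⟨{(s, 0)}, ?_, isPreconnected_singleton, rfl, rfl, ?_⟩
  · simpa using h
  · rintro z rfl; rfl

theorem RhoRel.closed {X : Type*} [MetricSpace X] {H : ℝ × ℝ → X} {u v : ℝ}
    (hH : ContinuousOn H (Icc u v ×ˢ Icc (0:ℝ) 1)) {a a' : ℕ → ℝ} {s s' : ℝ}
    (ha : Tendsto a atTop (nhds s)) (ha' : Tendsto a' atTop (nhds s'))
    (hR : ∀ n, RhoRel H u v (a n) (a' n)) : RhoRel H u v s s' := by
  set D : Set (ℝ × ℝ) := Icc u v ×ˢ Icc (0:ℝ) 1 with hD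
  have hDc : IsCompact D := isCompact_Icc.prod isCompact_Icc
  have hs : s ∈ Icc u v := isClosed_Icc.mem_of_tendsto ha (Eventually.of_forall fun n => (hR n).mem.1)
  have hs' : s' ∈ Icc u v :=
    isClosed_Icc.mem_of_tendsto ha' (Eventually.of_forall fun n => (hR n).mem.2)
  have mD : ∀ t ∈ Icc u v, (t, (0:ℝ)) ∈ D := fun t ht => ⟨ht, by simp⟩
  have lim : ∀ (b : ℕ → ℝ) (t : ℝ), Tendsto b atTop (nhds t) → (∀ n, b n ∈ Icc u v) →
      t ∈ Icc u v → Tendsto (fun n => H (b n, 0)) atTop (nhds (H (t, 0))) := by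
    intro b t hb hbm ht
    refine (hH _ (mD t ht)).tendsto.comp (tendsto_nhdsWithin_iff.2 ⟨?_, ?_⟩)
    · exact hb.prodMk_nhds tendsto_const_nhds
    · exact Eventually.of_forall fun n => mD _ (hbm n)
  have l1 := lim a s ha (fun n => (hR n).mem.1) hs
  have l2 := lim a' s' ha' (fun n => (hR n).mem.2) hs'
  have heq : H (s', 0) = H (s, 0) := by
    refine tendsto_nhds_unique l2 (l1.congr fun n => (hR n).eq)
  let E : Set (ℝ × ℝ) := D ∩ H ⁻¹' {H (s, 0)}
  have hEcl : IsClosed E := hH.preimage_isClosed_of_isClosed hDc.isClosed isClosed_singleton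
  have hE : IsCompact E := hDc.of_isClosed_subset hEcl inter_subset_left
  by_contra hcon
  obtain ⟨E₁, E₂, hE₁, hE₂, hdis, hEE, hA, hB⟩ := rho_split (A := {(s, (0:ℝ))})
      (B := {(s', (0:ℝ))}) hE isClosed_singleton isClosed_singleton (by
    rintro C hCE hC _ h1 _ h2 rfl rfl
    exact hcon ⟨C, hCE.trans inter_subset_left, hC, h1, h2, fun z hz => (hCE hz).2⟩)
  obtain ⟨U, V, hU, hV, hEU, hEV, hUV⟩ := normal_separation hE₁ hE₂ hdis
  let K : Set (ℝ × ℝ) := D \ (U ∪ V)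
  have hK : IsCompact K := hDc.diff (hU.union hV)
  have hHK : IsCompact (H '' K) := hK.image_of_continuousOn (hH.mono diff_subset)
  have hp : H (s, 0) ∉ H '' K := by
    rintro ⟨z, ⟨hzD, hzn⟩, hz⟩
    have : z ∈ E := ⟨hzD, hz⟩
    rw [hEE] at this
    exact hzn (this.imp (fun h => hEU h) (fun h => hEV h))
  have ev1 : ∀ᶠ n in atTop, H (a n, 0) ∉ H '' K :=
    l1.eventually (hHK.isClosed.isOpen_compl.mem_nhds hp)
  have hsU : (s, (0:ℝ)) ∈ U := hEU (hA ⟨⟨mD s hs, rfl⟩, rfl⟩)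
  have hsV : (s', (0:ℝ)) ∈ V := hEV (hB ⟨⟨mD s' hs', heq⟩, rfl⟩)
  have ev2 : ∀ᶠ n in atTop, (a n, (0:ℝ)) ∈ U :=
    (ha.prodMk_nhds tendsto_const_nhds).eventually (hU.mem_nhds hsU)
  have ev3 : ∀ᶠ n in atTop, (a' n, (0:ℝ)) ∈ V :=
    (ha'.prodMk_nhds tendsto_const_nhds).eventually (hV.mem_nhds hsV)
  obtain ⟨n, h1, h2, h3⟩ := (ev1.and (ev2.and ev3)).exists
  obtain ⟨C, hCD, hC, hc1, hc2, hc3⟩ := hR n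
  have hCUV : C ⊆ U ∪ V := by
    intro z hz
    by_contra hzn
    exact h1 ⟨z, ⟨hCD hz, hzn⟩, hc3 z hz⟩
  have := hC.subset_left_of_subset_union hU hV hUV hCUV ⟨_, hc1, h2⟩ hc2
  exact disjoint_left.1 hUV this h3

theorem RhoRel.between {X : Type*} [MetricSpace X] {H : ℝ × ℝ → X} {u v : ℝ}
    (hH : ContinuousOn H (Icc u v ×ˢ Icc (0:ℝ) 1))
    (hLip : LipschitzOnWith 1 (fun t => H (t, 0)) (Icc u v))
    (himg : ∀ z ∈ Icc u v ×ˢ Icc (0:ℝ) 1, H z ∈ (fun t => H (t, 0)) '' Icc u v)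
    {s s' q q' : ℝ} (hs : RhoRel H u v s s') (hq : RhoRel H u v q q')
    (hne : H (s, 0) ≠ H (q, 0)) (hsq : s < q) :
    ∃ x x', s < x ∧ x < q ∧ min s' q' < x' ∧ x' < max s' q' ∧ RhoRel H u v x x' := by
  set D : Set (ℝ × ℝ) := Icc u v ×ˢ Icc (0:ℝ) 1 with hD
  have hDc : IsCompact D := isCompact_Icc.prod isCompact_Icc
  have huv : u ≤ v := hs.mem.1.1.trans hs.mem.1.2
  have mD : ∀ t ∈ Icc u v, (t, (0:ℝ)) ∈ D := fun t ht => ⟨ht, by simp⟩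
  obtain ⟨r, hr0, hr1, hr⟩ := rho_exists_radius hLip (H (q, 0)) (dist_pos.2 hne)
  let g : ℝ × ℝ → ℝ := fun z => dist (H z) (H (q, 0))
  have hg : ContinuousOn g D :=
    continuous_dist.comp_continuousOn (hH.prodMk continuousOn_const)
  let E : Set (ℝ × ℝ) := D ∩ g ⁻¹' {r}
  have hEcl : IsClosed E := hg.preimage_isClosed_of_isClosed hDc.isClosed isClosed_singleton
  have hE : IsCompact E := hDc.of_isClosed_subset hEcl inter_subset_left
  let A : Set (ℝ × ℝ) := Icc s q ×ˢ {(0:ℝ)}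
  let B : Set (ℝ × ℝ) := uIcc s' q' ×ˢ {(0:ℝ)}
  have hAcl : IsClosed A := isClosed_Icc.prod isClosed_singleton
  have hBcl : IsClosed B := isClosed_Icc.prod isClosed_singleton
  have hAD : A ⊆ D := by
    rintro ⟨x, y⟩ ⟨hx, hy⟩
    obtain rfl : y = 0 := hy
    exact mD x ⟨hs.mem.1.1.trans hx.1, hx.2.trans hq.mem.1.2⟩
  have hBD : B ⊆ D := by
    rintro ⟨x, y⟩ ⟨hx, hy⟩
    obtain rfl : y = 0 := hy
    exact mD x ((convex_Icc u v).ordConnected.uIcc_subset hs.mem.2 hq.mem.2 hx)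
  have gs : r < g (s, 0) := hr1
  have gs' : r < g (s', 0) := by
    have : g (s', 0) = g (s, 0) := by simp only [g, hs.eq]
    rw [this]; exact gs
  have gq : g (q, 0) < r := by simpa [g] using hr0
  have gq' : g (q', 0) < r := by simpa [g, hq.eq] using hr0
  by_contra hcon
  obtain ⟨E₁, E₂, hE₁, hE₂, hdis, hEE, hA, hB⟩ := rho_split (A := A) (B := B) hE hAcl hBcl (by
    rintro C hCE hC ⟨x, y⟩ h1 ⟨x', y'⟩ h2 ⟨hx, hy⟩ ⟨hx', hy'⟩
    obtain rfl : y = 0 := hy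
    obtain rfl : y' = 0 := hy'
    have hCD : C ⊆ D := hCE.trans inter_subset_left
    have hsub : (H '' C).Subsingleton := by
      refine hr _ ?_ (hC.image _ (hH.mono hCD)) ?_
      · rintro _ ⟨z, hz, rfl⟩; exact himg z (hCD hz)
      · rintro _ ⟨z, hz, rfl⟩; exact (hCE hz).2
    have gx : g (x, 0) = r := (hCE h1).2
    have gx' : g (x', 0) = r := (hCE h2).2
    refine hcon ⟨x, x', lt_of_le_of_ne hx.1 ?_, lt_of_le_of_ne hx.2 ?_,
      lt_of_le_of_ne hx'.1 ?_, lt_of_le_of_ne hx'.2 ?_, C, hCD, hC, h1, h2,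
      fun z hz => hsub ⟨z, hz, rfl⟩ ⟨_, h1, rfl⟩⟩
    · rintro rfl; exact gs.ne' gx
    · rintro rfl; exact gq.ne gx
    · rintro h
      rcases min_choice s' q' with h' | h' <;> rw [← h, h'] at gx'
      · exact gs'.ne' gx'
      · exact gq'.ne gx'
    · rintro h
      rcases max_choice s' q' with h' | h' <;> rw [h, h'] at gx'
      · exact gs'.ne' gx'
      · exact gq'.ne gx')
  obtain ⟨θ, hθ1, hθ2, -⟩ := exists_continuous_zero_one_of_isClosed hE₂ hE₁ hdis.symm
  let cl : ℝ × ℝ → ℝ × ℝ := fun z =>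
    ((projIcc u v huv z.1 : ℝ), (projIcc (0:ℝ) 1 zero_le_one z.2 : ℝ))
  have hcl : Continuous cl := by
    refine Continuous.prodMk ?_ ?_
    · exact continuous_subtype_val.comp (continuous_projIcc.comp continuous_fst)
    · exact continuous_subtype_val.comp (continuous_projIcc.comp continuous_snd)
  have clD : ∀ z, cl z ∈ D := fun z => ⟨(projIcc u v huv z.1).2, (projIcc (0:ℝ) 1 zero_le_one z.2).2⟩
  have clid : ∀ z ∈ D, cl z = z := by
    rintro ⟨x, y⟩ ⟨hx, hy⟩
    simp only [cl]
    rw [projIcc_of_mem huv hx, projIcc_of_mem zero_le_one hy]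
  let F : ℝ × ℝ → ℂ := fun z => ⟨g (cl z) - r, 2 * θ (cl z) - 1⟩
  have hF : Continuous F := by
    have e : F = fun z => ((g (cl z) - r : ℝ) : ℂ) + ((2 * θ (cl z) - 1 : ℝ) : ℂ) * Complex.I := by
      funext z
      exact Complex.mk_eq_add_mul_I _ _
    have hgc : Continuous (fun z => g (cl z)) := hg.comp_continuous hcl clD
    have hθc : Continuous (fun z => θ (cl z)) := θ.continuous.comp hcl
    rw [e]
    exact (Complex.continuous_ofReal.comp (hgc.sub continuous_const)).add
      ((Complex.continuous_ofReal.comp ((continuous_const.mul hθc).sub continuous_const)).mul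
        continuous_const)
  have Fre : ∀ z ∈ D, (F z).re = g z - r := fun z hz => by simp only [F, clid z hz]
  have Fim : ∀ z ∈ D, (F z).im = 2 * θ z - 1 := fun z hz => by simp only [F, clid z hz]
  have him1 : ∀ z ∈ E₁, θ z = 1 := fun z hz => hθ2 hz
  have him2 : ∀ z ∈ E₂, θ z = 0 := fun z hz => hθ1 hz
  have hF0 : ∀ z, F z ≠ 0 := by
    intro z hz
    have h1 : g (cl z) - r = 0 := congrArg Complex.re hz
    have h2 : 2 * θ (cl z) - 1 = 0 := congrArg Complex.im hz
    have h3 : cl z ∈ E := ⟨clD z, by simpa [sub_eq_zero] using h1⟩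
    rw [hEE] at h3
    rcases h3 with h3 | h3
    · rw [him1 _ h3] at h2; norm_num at h2
    · rw [him2 _ h3] at h2; norm_num at h2
  obtain ⟨K₁, hK₁D, hK₁, k1, k2, k3⟩ := hs
  obtain ⟨K₂, hK₂D, hK₂, m1, m2, m3⟩ := hq
  refine rho_planar F hF hF0 hK₁ hK₂ (A := A) (B := B)
    (isPreconnected_Icc.prod isPreconnected_singleton)
    (isPreconnected_uIcc.prod isPreconnected_singleton) k1 k2 m1 m2
    ⟨left_mem_Icc.2 hsq.le, rfl⟩ ⟨right_mem_Icc.2 hsq.le, rfl⟩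
    ⟨left_mem_uIcc, rfl⟩ ⟨right_mem_uIcc, rfl⟩ ?_ ?_ ?_ ?_
  · intro z hz
    rw [Fre z (hK₁D hz)]
    have : g z = g (s, 0) := by simp only [g, k3 z hz]
    linarith
  · intro z hz
    rw [Fre z (hK₂D hz)]
    have : g z = g (q, 0) := by simp only [g, m3 z hz]
    linarith
  · intro z hz h0
    rw [Fre z (hAD hz)] at h0
    rw [Fim z (hAD hz), him1 z (hA ⟨⟨hAD hz, by simpa [sub_eq_zero] using h0⟩, hz⟩)]
    norm_num
  · intro z hz h0
    rw [Fre z (hBD hz)] at h0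
    rw [Fim z (hBD hz), him2 z (hB ⟨⟨hBD hz, by simpa [sub_eq_zero] using h0⟩, hz⟩)]
    norm_num

theorem rho_contract {X : Type*} [MetricSpace X] {f : ℝ → X} {R : ℝ → ℝ → Prop} {a b : ℝ}
    (hab : a < b) (hf : ContinuousOn f (Icc a b))
    (hrefl : ∀ s ∈ Icc a b, R s s) (hR : R a b) (hconst : ∀ s s', R s s' → f s = f s')
    (hclosed : ∀ (x x' : ℕ → ℝ) (s s' : ℝ), Tendsto x atTop (nhds s) →
      Tendsto x' atTop (nhds s') → (∀ n, R (x n) (x' n)) → R s s')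
    (hG : ∀ s s' q q', R s s' → R q q' → f s ≠ f q → s < q →
      ∃ x x', s < x ∧ x < q ∧ min s' q' < x' ∧ x' < max s' q' ∧ R x x') :
    ∃ H : ℝ × ℝ → X, ContinuousOn H (Icc a b ×ˢ Icc 0 1) ∧
      (∀ t ∈ Icc a b, H (t, 0) = f t) ∧
      (∀ t ∈ Icc a b, H (t, 1) = f a) ∧
      (∀ s ∈ Icc (0:ℝ) 1, H (a, s) = f a ∧ H (b, s) = f b) ∧
      (∀ p ∈ Icc a b ×ˢ Icc (0:ℝ) 1, H p ∈ f '' Icc a b) := by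
  let T : ℝ × ℝ → Set ℝ := fun z =>
    {s | a ≤ s ∧ s ≤ z.1 ∧ s ≤ z.2 ∧ ∃ s', z.1 ≤ s' ∧ s' ≤ b ∧ R s s'}
  have hT : ∀ z ∈ Icc a b ×ˢ Icc a b, ∃ m, IsGreatest (T z) m := by
    rintro ⟨t, τ⟩ ⟨ht, hτ⟩
    have hne : (T (t, τ)).Nonempty := ⟨a, le_rfl, ht.1, hτ.1, b, ht.2, le_rfl, hR⟩
    have hbd : BddAbove (T (t, τ)) := ⟨t, fun s hs => hs.2.1⟩
    have hcl : IsClosed (T (t, τ)) := by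
      rw [← isSeqClosed_iff_isClosed]
      intro x s hx hxs
      choose h1 h2 h3 x' h4 h5 h6 using hx
      obtain ⟨s', hs', φ, hφ, hlim⟩ := isCompact_Icc.tendsto_subseq (fun n => (⟨h4 n, h5 n⟩ : x' n ∈ Icc t b))
      exact ⟨ge_of_tendsto' hxs h1, le_of_tendsto' hxs h2, le_of_tendsto' hxs h3, s', hs'.1, hs'.2,
        hclosed _ _ _ _ (hxs.comp hφ.tendsto_atTop) hlim (fun n => h6 (φ n))⟩
    exact ⟨_, hcl.csSup_mem hne hbd, fun s hs => le_csSup hbd hs⟩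
  choose! σ hσ using hT
  have hcont : ContinuousOn (fun z => f (σ z)) (Icc a b ×ˢ Icc a b) := by
    by_contra hcon
    simp only [ContinuousOn, not_forall] at hcon
    obtain ⟨z, hz, hcon⟩ := hcon
    rw [ContinuousWithinAt, Metric.tendsto_nhds] at hcon
    push Not at hcon
    obtain ⟨ε, hε, hfr⟩ := hcon
    obtain ⟨y, hy, hyε⟩ := exists_seq_forall_of_frequently hfr
    rw [tendsto_nhdsWithin_iff] at hy
    obtain ⟨hyz, hyD⟩ := hy
    obtain ⟨N, hN⟩ := eventually_atTop.1 hyD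
    have hyD' : ∀ n, y (n + N) ∈ Icc a b ×ˢ Icc a b := fun n => hN _ (by omega)
    have hyz' : Tendsto (fun n => y (n + N)) atTop (nhds z) := (tendsto_add_atTop_iff_nat N).2 hyz
    have hg := fun n => (hσ _ (hyD' n)).1
    choose h1 h2 h3 x' h4 h5 h6 using hg
    have hm : ∀ n, (σ (y (n + N)), x' n) ∈ Icc a b ×ˢ Icc a b := fun n =>
      ⟨⟨h1 n, (h2 n).trans (hyD' n).1.2⟩, ⟨(hyD' n).1.1.trans (h4 n), h5 n⟩⟩
    obtain ⟨⟨s, s'⟩, ⟨hs, hs'⟩, φ, hφ, hlim⟩ := (isCompact_Icc.prod isCompact_Icc).tendsto_subseq hm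
    have hl1 : Tendsto (fun n => σ (y (φ n + N))) atTop (nhds s) := (continuous_fst.tendsto _).comp hlim
    have hl2 : Tendsto (fun n => x' (φ n)) atTop (nhds s') := (continuous_snd.tendsto _).comp hlim
    have hyφ : Tendsto (fun n => y (φ n + N)) atTop (nhds z) := hyz'.comp hφ.tendsto_atTop
    have ht : Tendsto (fun n => (y (φ n + N)).1) atTop (nhds z.1) := (continuous_fst.tendsto _).comp hyφ
    have hτ : Tendsto (fun n => (y (φ n + N)).2) atTop (nhds z.2) := (continuous_snd.tendsto _).comp hyφ
    have hRs : R s s' := hclosed _ _ _ _ hl1 hl2 (fun n => h6 (φ n))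
    have hsT : s ∈ T z := ⟨hs.1, le_of_tendsto_of_tendsto' hl1 ht (fun n => h2 (φ n)),
      le_of_tendsto_of_tendsto' hl1 hτ (fun n => h3 (φ n)), s',
      le_of_tendsto_of_tendsto' ht hl2 (fun n => h4 (φ n)), hs'.2, hRs⟩
    have hsσ : s ≤ σ z := (hσ z hz).2 hsT
    obtain ⟨q1, q2, q3, q', q4, q5, q6⟩ := (hσ z hz).1
    have hfs : Tendsto (fun n => f (σ (y (φ n + N)))) atTop (nhds (f s)) := by
      refine (hf s hs).tendsto.comp (tendsto_nhdsWithin_iff.2 ⟨hl1, Eventually.of_forall ?_⟩)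
      intro n; exact (hm (φ n)).1
    have hne : f s ≠ f (σ z) := by
      intro heq
      have : ε ≤ dist (f s) (f (σ z)) :=
        ge_of_tendsto' (hfs.dist tendsto_const_nhds) (fun n => hyε _)
      rw [heq, dist_self] at this
      linarith
    have hlt : s < σ z := lt_of_le_of_ne hsσ (fun h => hne (by rw [h]))
    obtain ⟨x, w, hx1, hx2, hw1, hw2, hxw⟩ := hG _ _ _ _ hRs q6 hne hlt
    have hzs' : z.1 ≤ s' := le_of_tendsto_of_tendsto' ht hl2 (fun n => h4 (φ n))
    have hzw : z.1 < w := lt_of_le_of_lt (le_min hzs' q4) hw1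
    have ev : ∀ᶠ n in atTop, x < (y (φ n + N)).1 ∧ x < (y (φ n + N)).2 ∧ (y (φ n + N)).1 < w ∧
        σ (y (φ n + N)) < x := by
      refine (ht.eventually (lt_mem_nhds (hx2.trans_le q2))).and
        ((hτ.eventually (lt_mem_nhds (hx2.trans_le q3))).and
        ((ht.eventually (gt_mem_nhds hzw)).and (hl1.eventually (gt_mem_nhds hx1))))
    obtain ⟨n, e1, e2, e3, e4⟩ := ev.exists
    have : x ≤ σ (y (φ n + N)) := (hσ _ (hyD' (φ n))).2
      ⟨hs.1.trans hx1.le, e1.le, e2.le, w, e3.le, hw2.le.trans (max_le hs'.2 q5), hxw⟩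
    linarith
  have hz : ∀ p ∈ Icc a b ×ˢ Icc (0:ℝ) 1, (p.1, b - p.2 * (b - a)) ∈ Icc a b ×ˢ Icc a b := by
    rintro ⟨t, s⟩ ⟨ht, hs⟩
    refine ⟨ht, ?_, ?_⟩
    · have := mul_le_mul_of_nonneg_right hs.2 (sub_nonneg.2 hab.le)
      simp only at this ⊢
      linarith
    · have := mul_nonneg hs.1 (sub_nonneg.2 hab.le)
      simp only at this ⊢
      linarith
  refine ⟨fun p => f (σ (p.1, b - p.2 * (b - a))), ?_, ?_, ?_, ?_, ?_⟩
  · exact hcont.comp (f := fun p : ℝ × ℝ => (p.1, b - p.2 * (b - a))) (by fun_prop) hz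
  · intro t ht
    have hm : (t, b) ∈ Icc a b ×ˢ Icc a b := ⟨ht, right_mem_Icc.2 hab.le⟩
    have h1 := (hσ _ hm).1.2.1
    have h2 := (hσ _ hm).2 (show t ∈ T (t, b) from ⟨ht.1, le_rfl, ht.2, t, le_rfl, ht.2, hrefl t ht⟩)
    have : σ (t, b) = t := le_antisymm h1 h2
    simp [this]
  · intro t ht
    have hm : (t, a) ∈ Icc a b ×ˢ Icc a b := ⟨ht, left_mem_Icc.2 hab.le⟩
    have h1 := (hσ _ hm).1.2.2.1
    have h2 := (hσ _ hm).1.1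
    have : σ (t, a) = a := le_antisymm h1 h2
    simp [this]
  · intro s hs
    constructor
    · have hm := hz (a, s) ⟨left_mem_Icc.2 hab.le, hs⟩
      have h1 := (hσ _ hm).1.2.1
      have h2 := (hσ _ hm).1.1
      have := le_antisymm h1 h2
      simp only at this ⊢
      rw [this]
    · have hm := hz (b, s) ⟨right_mem_Icc.2 hab.le, hs⟩
      obtain ⟨-, -, -, w, hw1, hw2, hw⟩ := (hσ _ hm).1
      obtain rfl : w = b := le_antisymm hw2 hw1
      exact hconst _ _ hw
  · intro p hp
    have h := (hσ _ (hz p hp)).1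
    exact ⟨_, ⟨h.1, h.2.1.trans hp.1.2⟩, rfl⟩

/-- Core lemma: a null-homotopic (in its image) nonconstant Lipschitz loop contains a
strictly earlier-ending null-homotopic (in its image) subloop. -/
theorem rho_core {X : Type*} [MetricSpace X] {f : ℝ → X} {u v : ℝ} (huv : u < v)
    (hLip : LipschitzOnWith 1 f (Icc u v)) {q : ℝ} (hq : q ∈ Icc u v) (hfq : f q ≠ f u)
    (huvf : f u = f v)
    (hH : ∃ H : ℝ × ℝ → X, ContinuousOn H (Icc u v ×ˢ Icc 0 1) ∧
      (∀ t ∈ Icc u v, H (t, 0) = f t) ∧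
      (∀ t ∈ Icc u v, H (t, 1) = f u) ∧
      (∀ s ∈ Icc (0:ℝ) 1, H (u, s) = f u ∧ H (v, s) = f v) ∧
      (∀ p ∈ Icc u v ×ˢ Icc (0:ℝ) 1, H p ∈ f '' Icc u v)) :
    ∃ a b, u < a ∧ a < b ∧ b < v ∧ f a = f b ∧
      ∃ H : ℝ × ℝ → X, ContinuousOn H (Icc a b ×ˢ Icc 0 1) ∧
      (∀ t ∈ Icc a b, H (t, 0) = f t) ∧
      (∀ t ∈ Icc a b, H (t, 1) = f a) ∧
      (∀ s ∈ Icc (0:ℝ) 1, H (a, s) = f a ∧ H (b, s) = f b) ∧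
      (∀ p ∈ Icc a b ×ˢ Icc (0:ℝ) 1, H p ∈ f '' Icc a b) := by
  obtain ⟨H, hc, h0, h1, hs, himg⟩ := hH
  have hEq : EqOn (fun t => H (t, 0)) f (Icc u v) := fun t ht => h0 t ht
  have hLip' : LipschitzOnWith 1 (fun t => H (t, 0)) (Icc u v) := by
    intro x hx y hy
    simp only
    rw [h0 x hx, h0 y hy]; exact hLip hx hy
  have himg' : ∀ z ∈ Icc u v ×ˢ Icc (0:ℝ) 1, H z ∈ (fun t => H (t, 0)) '' Icc u v := by
    intro z hz
    rw [hEq.image_eq]; exact himg z hz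
  have hum : u ∈ Icc u v := left_mem_Icc.2 huv.le
  have hvm : v ∈ Icc u v := right_mem_Icc.2 huv.le
  have z01 : (0:ℝ) ∈ Icc (0:ℝ) 1 := by simp
  have o01 : (1:ℝ) ∈ Icc (0:ℝ) 1 := by simp
  have huR : RhoRel H u v u v := by
    refine ⟨{u} ×ˢ Icc 0 1 ∪ Icc u v ×ˢ {1} ∪ {v} ×ˢ Icc 0 1, ?_, ?_, ?_, ?_, ?_⟩
    · rintro ⟨x, y⟩ ((⟨hx, hy⟩ | ⟨hx, hy⟩) | ⟨hx, hy⟩)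
      · obtain rfl : x = u := hx
        exact ⟨hum, hy⟩
      · obtain rfl : y = 1 := hy
        exact ⟨hx, o01⟩
      · obtain rfl : x = v := hx
        exact ⟨hvm, hy⟩
    · refine IsPreconnected.union (v, 1) ?_ ?_ (IsPreconnected.union (u, 1) ?_ ?_ ?_ ?_) ?_
      · exact Or.inr ⟨hvm, rfl⟩
      · exact ⟨rfl, o01⟩
      · exact ⟨rfl, o01⟩
      · exact ⟨hum, rfl⟩
      · exact isPreconnected_singleton.prod isPreconnected_Icc
      · exact isPreconnected_Icc.prod isPreconnected_singleton
      · exact isPreconnected_singleton.prod isPreconnected_Icc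
    · exact Or.inl (Or.inl ⟨rfl, z01⟩)
    · exact Or.inr ⟨rfl, z01⟩
    · rw [h0 u hum]
      rintro ⟨x, y⟩ ((⟨hx, hy⟩ | ⟨hx, hy⟩) | ⟨hx, hy⟩)
      · obtain rfl : x = u := hx
        exact (hs y hy).1
      · obtain rfl : y = 1 := hy
        exact h1 x hx
      · obtain rfl : x = v := hx
        exact (hs y hy).2.trans huvf.symm
  have huq : u < q := lt_of_le_of_ne hq.1 (fun h => hfq (by rw [h]))
  have hqv : q ≤ v := hq.2
  obtain ⟨a, b, ha1, ha2, hb1, hb2, hab⟩ := RhoRel.between hc hLip' himg' huR (RhoRel.rfl' hq)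
    (by rw [h0 u hum, h0 q hq]; exact hfq.symm) huq
  rw [min_eq_right hqv] at hb1
  rw [max_eq_left hqv] at hb2
  have hsub : Icc a b ⊆ Icc u v := Icc_subset_Icc ha1.le hb2.le
  have hRf : ∀ s s', RhoRel H u v s s' → f s = f s' := fun s s' h => by
    rw [← h0 s h.mem.1, ← h0 s' h.mem.2]; exact h.eq
  refine ⟨a, b, ha1, ha2.trans hb1, hb2, hRf _ _ hab, ?_⟩
  refine rho_contract (R := RhoRel H u v) (ha2.trans hb1) (hLip.continuousOn.mono hsub)
    (fun s hs => RhoRel.rfl' (hsub hs)) hab hRf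
    (fun x x' s s' hx hx' hr => RhoRel.closed hc hx hx' hr) ?_
  intro s s' q q' h h' hne hlt
  exact RhoRel.between hc hLip' himg' h h'
    (by rw [h0 s h.mem.1, h0 q h'.mem.1]; exact hne) hlt

theorem RPath.edist_le {X : Type*} [MetricSpace X] (c : RPath X) {s t : ℝ} (hs : 0 ≤ s)
    (hst : s ≤ t) (ht : t ≤ c.len) : dist (c.toFun s) (c.toFun t) ≤ t - s := by
  have h := eVariationOn.edist_le c.toFun (s := Icc s t) (left_mem_Icc.2 hst) (right_mem_Icc.2 hst)
  rw [c.arclength s t hs hst ht, edist_dist] at h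
  exact (ENNReal.ofReal_le_ofReal_iff (sub_nonneg.2 hst)).1 h

theorem RPath.wedge_bdd {X : Type*} [MetricSpace X] (c₁ c₂ : RPath X) :
    BddAbove {b : ℝ | 0 ≤ b ∧ b ≤ c₁.len ∧ b ≤ c₂.len ∧
      ∀ t ∈ Icc 0 b, c₁.toFun t = c₂.toFun t} := ⟨c₁.len, fun _ hb => hb.2.1⟩

theorem RPath.wedge_mem {X : Type*} [MetricSpace X] {c₁ c₂ : RPath X} {p : X}
    (h1 : c₁.StartsAt p) (h2 : c₂.StartsAt p) :
    (0:ℝ) ∈ {b : ℝ | 0 ≤ b ∧ b ≤ c₁.len ∧ b ≤ c₂.len ∧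
      ∀ t ∈ Icc 0 b, c₁.toFun t = c₂.toFun t} := by
  refine ⟨le_rfl, c₁.len_nonneg, c₂.len_nonneg, fun t ht => ?_⟩
  obtain rfl : t = 0 := le_antisymm ht.2 ht.1
  exact h1.trans h2.symm

theorem RPath.wedge_le {X : Type*} [MetricSpace X] {c₁ c₂ : RPath X} {p : X}
    (h1 : c₁.StartsAt p) (h2 : c₂.StartsAt p) :
    RPath.wedgeLen c₁ c₂ ≤ c₁.len ∧ RPath.wedgeLen c₁ c₂ ≤ c₂.len :=
  ⟨csSup_le ⟨0, RPath.wedge_mem h1 h2⟩ fun _ hb => hb.2.1,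
    csSup_le ⟨0, RPath.wedge_mem h1 h2⟩ fun _ hb => hb.2.2.1⟩

theorem RPath.eq_of_lt_wedge {X : Type*} [MetricSpace X] {c₁ c₂ : RPath X} {p : X}
    (h1 : c₁.StartsAt p) (h2 : c₂.StartsAt p) {l : ℝ} (hl : l < RPath.wedgeLen c₁ c₂) :
    ∀ t ∈ Icc 0 l, c₁.toFun t = c₂.toFun t := by
  obtain ⟨b, hb, hlb⟩ := exists_lt_of_lt_csSup ⟨0, RPath.wedge_mem h1 h2⟩ hl
  exact fun t ht => hb.2.2.2 t ⟨ht.1, ht.2.trans hlb.le⟩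

/-- For a length space `X`, the group `Λ(X)` of ρ-loops at the
basepoint, with the metric `d(c₁,c₂) = L(c₁)+L(c₂)-2L(c₁∧c₂)`, is complete: every
Cauchy sequence `(cᵢ)` of ρ-loops has lengths converging to some `L ≥ 0`, stabilizes
on every interval `[0,L′]` with `L′ < L`, and the limit loop defined by these stable
values is again a ρ-loop, to which the sequence converges. -/
theorem rhoLoopGroup_complete {X : Type*} [MetricSpace X] (hX : IsLengthSpace X)
    (base : X) (c : ℕ → RPath X)
    (hstart : ∀ n, (c n).StartsAt base) (hloop : ∀ n, (c n).EndsAt base)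
    (hcauchy : ∀ ε : ℝ, 0 < ε → ∃ N : ℕ, ∀ m ≥ N, ∀ n ≥ N,
      RPath.rhoDist (c m) (c n) < ε) :
    ∃ d : RPath X, d.StartsAt base ∧ d.EndsAt base ∧
      Tendsto (fun n => (c n).len) atTop (nhds d.len) ∧
      (∀ L' : ℝ, 0 ≤ L' → L' < d.len → ∃ N : ℕ, ∀ n ≥ N,
        ∀ t ∈ Icc 0 L', (c n).toFun t = d.toFun t) ∧
      Tendsto (fun n => RPath.rhoDist (c n) d) atTop (nhds 0) := by
  have wle := fun m n => RPath.wedge_le (hstart m) (hstart n)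
  have hlenC : CauchySeq (fun n => (c n).len) := by
    rw [Metric.cauchySeq_iff]
    intro ε hε
    obtain ⟨N, hN⟩ := hcauchy ε hε
    refine ⟨N, fun m hm n hn => ?_⟩
    have h := hN m hm n hn
    have h1 := wle m n
    rw [RPath.rhoDist] at h
    rw [Real.dist_eq, abs_lt]
    constructor <;> linarith [h1.1, h1.2]
  obtain ⟨L, hL⟩ := cauchySeq_tendsto_of_complete hlenC
  have hL0 : 0 ≤ L := ge_of_tendsto' hL fun n => (c n).len_nonneg
  have stab : ∀ l : ℝ, l < L → ∃ N : ℕ, ∀ m ≥ N, ∀ n ≥ N, l < (c n).len ∧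
      ∀ t ∈ Icc 0 l, (c m).toFun t = (c n).toFun t := by
    intro l hl
    obtain ⟨N1, hN1⟩ := hcauchy (L - l) (by linarith)
    obtain ⟨N2, hN2⟩ := eventually_atTop.1 (hL.eventually (lt_mem_nhds (show (L + l) / 2 < L by linarith)))
    refine ⟨max N1 N2, fun m hm n hn => ?_⟩
    have a1 := hN2 m (le_of_max_le_right hm)
    have a2 := hN2 n (le_of_max_le_right hn)
    have a3 := hN1 m (le_of_max_le_left hm) n (le_of_max_le_left hn)
    rw [RPath.rhoDist] at a3
    exact ⟨by linarith, RPath.eq_of_lt_wedge (hstart m) (hstart n) (by linarith)⟩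
  choose! N hN using stab
  classical
  let d : ℝ → X := fun t => if 0 ≤ t ∧ t < L then (c (N t)).toFun t else base
  have dout : ∀ t, L ≤ t → d t = base := fun t ht => if_neg fun h => absurd h.2 ht.not_gt
  have deq : ∀ l, l < L → ∀ n ≥ N l, ∀ t ∈ Icc 0 l, (c n).toFun t = d t := by
    intro l hl n hn t ht
    have htL : t < L := ht.2.trans_lt hl
    have e : d t = (c (N t)).toFun t := if_pos ⟨ht.1, htL⟩
    rw [e, (hN l hl n hn (max (N l) (N t)) (le_max_left _ _)).2 t ht,
      (hN t htL (N t) le_rfl (max (N l) (N t)) (le_max_right _ _)).2 t ⟨ht.1, le_rfl⟩]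
  have d0 : d 0 = base := by
    rcases hL0.eq_or_lt with h | h
    · exact dout 0 h.symm.le
    · rw [← deq 0 h _ le_rfl 0 (by simp)]; exact hstart _
  have dlip0 : ∀ s t, 0 ≤ s → s ≤ t → t ≤ L → dist (d s) (d t) ≤ t - s := by
    intro s t hs hst ht
    rcases ht.eq_or_lt with rfl | ht
    · rcases hst.eq_or_lt with rfl | hst
      · simp
      rw [dout t le_rfl]
      refine ge_of_tendsto (hL.sub_const s) ?_
      filter_upwards [eventually_ge_atTop (N s)] with n hn
      rw [← deq s hst n hn s ⟨hs, le_rfl⟩]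
      have h := (c n).edist_le hs (hN s hst n hn n hn).1.le le_rfl
      have h' : (c n).toFun (c n).len = base := hloop n
      rwa [h'] at h
    · rw [← deq t ht _ le_rfl s ⟨hs, hst⟩, ← deq t ht _ le_rfl t ⟨hs.trans hst, le_rfl⟩]
      exact RPath.edist_le _ hs hst (hN t ht _ le_rfl _ le_rfl).1.le
  have dlip : LipschitzOnWith 1 d (Icc 0 L) := by
    refine LipschitzOnWith.of_dist_le_mul fun x hx y hy => ?_
    rw [NNReal.coe_one, one_mul, Real.dist_eq]
    rcases le_total x y with h | h
    · rw [abs_sub_comm, abs_of_nonneg (sub_nonneg.2 h)]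
      exact dlip0 x y hx.1 h hy.2
    · rw [dist_comm, abs_of_nonneg (sub_nonneg.2 h)]
      exact dlip0 y x hy.1 h hx.2
  have darc0 : ∀ s t, 0 ≤ s → s ≤ t → t < L →
      eVariationOn d (Icc s t) = ENNReal.ofReal (t - s) := by
    intro s t hs hst ht
    rw [← (c (N t)).arclength s t hs hst (hN t ht _ le_rfl _ le_rfl).1.le]
    exact eVariationOn.eq_of_eqOn fun x hx =>
      (deq t ht _ le_rfl x ⟨hs.trans hx.1, hx.2⟩).symm
  have darc : ∀ s t, 0 ≤ s → s ≤ t → t ≤ L →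
      eVariationOn d (Icc s t) = ENNReal.ofReal (t - s) := by
    intro s t hs hst ht
    rcases ht.lt_or_eq with ht' | rfl
    · exact darc0 s t hs hst ht'
    refine le_antisymm ?_ ?_
    · have h1 := (dlip.mono (Icc_subset_Icc_left hs)).comp_eVariationOn_le (g := id) (s := Icc s t)
        (fun x hx => hx)
      have h2 := (monotoneOn_id (s := Icc s t)).eVariationOn_le (left_mem_Icc.2 hst)
        (right_mem_Icc.2 hst)
      simp only [inter_self, id] at h2
      refine h1.trans ?_
      simpa using h2
    · have hlim : Tendsto (fun x => ENNReal.ofReal (x - s)) (nhdsWithin t (Iio t))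
          (nhds (ENNReal.ofReal (t - s))) := by
        refine (Continuous.tendsto ?_ t).mono_left nhdsWithin_le_nhds
        exact ENNReal.continuous_ofReal.comp (continuous_id.sub continuous_const)
      refine le_of_tendsto hlim ?_
      filter_upwards [self_mem_nhdsWithin] with x hx
      rcases le_total s x with hsx | hsx
      · rw [← darc0 s x hs hsx hx]
        exact eVariationOn.mono _ (Icc_subset_Icc_right (le_of_lt hx))
      · rw [ENNReal.ofReal_of_nonpos (sub_nonpos.2 hsx)]; exact zero_le
  let dp : RPath X :=
    { len := L
      len_nonneg := hL0
      toFun := d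
      contOn := dlip.continuousOn
      arclength := darc
      clamp_left := fun t ht => by
        rcases ht.eq_or_lt with rfl | ht
        · rfl
        · rw [d0]; exact if_neg fun h => absurd h.1 ht.not_ge
      clamp_right := fun t ht => by rw [dout t ht, dout L le_rfl]
      weaklyNormal := by
        rintro ⟨u, v, hu, huv, hv, heq, hH⟩
        have hsub : Icc u v ⊆ Icc 0 L := Icc_subset_Icc hu hv
        obtain ⟨q, hq, hfq⟩ : ∃ q ∈ Icc u v, d q ≠ d u := by
          by_contra! hcon
          have h1 := darc u v hu huv.le hv
          rw [eVariationOn.constant_on] at h1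
          · have := ENNReal.ofReal_pos.2 (sub_pos.2 huv)
            rw [← h1] at this
            exact lt_irrefl _ this
          · rintro _ ⟨x, hx, rfl⟩ _ ⟨y, hy, rfl⟩
            rw [hcon x hx, hcon y hy]
        obtain ⟨a, b, hua, hab, hbv, hfab, H, k1, k2, k3, k4, k5⟩ :=
          rho_core huv (dlip.mono hsub) hq hfq heq hH
        have hbL : b < L := hbv.trans_le hv
        have E := deq b hbL _ le_rfl
        have h0a : 0 ≤ a := hu.trans hua.le
        have E' : ∀ t ∈ Icc a b, (c (N b)).toFun t = d t := fun t ht => E t ⟨h0a.trans ht.1, ht.2⟩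
        have Ea := E' a (left_mem_Icc.2 hab.le)
        have Eb := E' b (right_mem_Icc.2 hab.le)
        refine (c (N b)).weaklyNormal ⟨a, b, h0a, hab, (hN b hbL _ le_rfl _ le_rfl).1.le, ?_,
          H, k1, ?_, ?_, ?_, ?_⟩
        · rw [Ea, Eb, hfab]
        · intro t ht; rw [E' t ht]; exact k2 t ht
        · intro t ht; rw [Ea]; exact k3 t ht
        · intro s hs; rw [Ea, Eb]; exact k4 s hs
        · intro p hp
          rw [EqOn.image_eq (show EqOn (c (N b)).toFun d (Icc a b) from E')]
          exact k5 p hp }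
  have hdstart : dp.StartsAt base := d0
  refine ⟨dp, hdstart, dout L le_rfl, hL, fun l hl0 hl => ⟨N l, fun n hn => deq l hl n hn⟩, ?_⟩
  rw [Metric.tendsto_atTop]
  intro ε hε
  have hw := fun n => RPath.wedge_le (hstart n) hdstart
  obtain ⟨M, hM⟩ := Metric.tendsto_atTop.1 hL (ε / 4) (by linarith)
  have hlow : ∃ M', ∀ n ≥ M', L - ε / 4 ≤ RPath.wedgeLen (c n) dp := by
    by_cases h : 0 ≤ L - ε / 4
    · have hlt : L - ε / 4 < L := by linarith
      refine ⟨N (L - ε / 4), fun n hn => le_csSup (RPath.wedge_bdd _ _) ⟨h, ?_, hlt.le, ?_⟩⟩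
      · exact (hN _ hlt n hn n hn).1.le
      · exact deq _ hlt n hn
    · refine ⟨0, fun n _ => (not_le.1 h).le.trans ?_⟩
      exact le_csSup (RPath.wedge_bdd _ _) (RPath.wedge_mem (hstart n) hdstart)
  obtain ⟨M', hM'⟩ := hlow
  refine ⟨max M M', fun n hn => ?_⟩
  have a1 := hM n (le_of_max_le_left hn)
  have a2 := hM' n (le_of_max_le_right hn)
  have a3 := hw n
  have a4 : dp.len = L := rfl
  rw [Real.dist_eq, abs_lt] at a1
  rw [Real.dist_eq, sub_zero, RPath.rhoDist, abs_lt]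
  rw [a4] at a3 ⊢
  constructor <;> linarith [a3.1, a3.2, a1.1, a1.2]
end

section
/- For a length space X with basepoints * and *′, any ρ-path k from *′ to * induces an isometry from (X̄,*) to (X̄,*′) given by c ↦ k⋆c, and the composition of this isometry with the endpoint map equals the endpoint map on (X̄,*). -/
open Set

namespace RPath

variable {X : Type*} [MetricSpace X]

/-- The amount of cancellation between a path `k` and a following path `c`: the
length of the maximal final segment of `k` that coincides, with reversed
orientation, with an initial segment of `c`. -/
noncomputable def cancelAmt (k c : RPath X) : ℝ :=
  sSup {s : ℝ | 0 ≤ s ∧ s ≤ k.len ∧ s ≤ c.len ∧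
    ∀ t ∈ Set.Icc 0 s, k.toFun (k.len - t) = c.toFun t}

/-- `m` is the cancelled concatenation `k ⋆ c`: it is obtained from the concatenation
`k ∗ c` by removing the maximal final segment of `k` coinciding with an initial
segment of `c` with reversed orientation, together with that initial segment of
`c`. -/
def IsCancelConcat (k c m : RPath X) : Prop :=
  m.len = k.len + c.len - 2 * cancelAmt k c ∧
  (∀ t ∈ Set.Icc 0 (k.len - cancelAmt k c), m.toFun t = k.toFun t) ∧
  (∀ t ∈ Set.Icc (k.len - cancelAmt k c) m.len,
    m.toFun t = c.toFun (t - (k.len - cancelAmt k c) + cancelAmt k c))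

/-- `r` is the reverse `c⁻¹` of the path `c`. -/
def IsReverse (c r : RPath X) : Prop :=
  r.len = c.len ∧ ∀ t ∈ Set.Icc 0 c.len, r.toFun t = c.toFun (c.len - t)

end RPath

/-- `f` restricted to `[u,v]` is null-homotopic in its image rel endpoints. -/
def NH {X : Type*} [MetricSpace X] (f : ℝ → X) (u v : ℝ) : Prop :=
  ∃ H : ℝ × ℝ → X, ContinuousOn H (Icc u v ×ˢ Icc 0 1) ∧
      (∀ t ∈ Icc u v, H (t, 0) = f t) ∧
      (∀ t ∈ Icc u v, H (t, 1) = f u) ∧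
      (∀ s ∈ Icc (0:ℝ) 1, H (u, s) = f u ∧ H (v, s) = f v) ∧
      (∀ p ∈ Icc u v ×ˢ Icc (0:ℝ) 1, H p ∈ f '' Icc u v)

/-- tree inequality -/
def TreeOn {X : Type*} [MetricSpace X] (f : ℝ → X) (h : ℝ → ℝ) (e u v : ℝ) : Prop :=
  ∀ x y, u ≤ x → x ≤ y → y ≤ v → ∃ m ∈ Icc x y, dist (f x) (f y) ≤ h x + h y - 2 * h m + e

/-- one-Lipschitz on an interval -/
def Lip1 (h : ℝ → ℝ) (u v : ℝ) : Prop :=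
  ∀ x ∈ Icc u v, ∀ y ∈ Icc u v, |h x - h y| ≤ |x - y|

theorem Lip1.cont {h : ℝ → ℝ} {u v : ℝ} (hL : Lip1 h u v) : ContinuousOn h (Icc u v) := by
  have : LipschitzOnWith 1 h (Icc u v) := by
    apply LipschitzOnWith.of_dist_le_mul
    intro x hx y hy
    simpa [Real.dist_eq] using hL x hx y hy
  exact this.continuousOn

theorem exists_level {h : ℝ → ℝ} {s x l : ℝ} (hsx : s ≤ x) (hc : ContinuousOn h (Icc s x))
    (h1 : h s ≤ l) (h2 : l ≤ h x) :
    ∃ z ∈ Icc s x, h z = l ∧ ∀ y ∈ Icc z x, l ≤ h y := by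
  have hK : IsCompact (Icc s x ∩ h ⁻¹' Iic l) :=
    isCompact_Icc.of_isClosed_subset (hc.preimage_isClosed_of_isClosed isClosed_Icc isClosed_Iic)
      inter_subset_left
  obtain ⟨z, ⟨hz, hzl⟩, hmax⟩ := hK.exists_isGreatest ⟨s, ⟨le_rfl, hsx⟩, h1⟩
  have hzl' : h z ≤ l := hzl
  obtain ⟨w, hw, hwl⟩ := intermediate_value_Icc hz.2 (hc.mono (Icc_subset_Icc hz.1 le_rfl)) ⟨hzl', h2⟩
  have hwz : w ≤ z := hmax ⟨⟨hz.1.trans hw.1, hw.2⟩, hwl.le⟩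
  have hwz' : w = z := le_antisymm hwz hw.1
  subst hwz'
  refine ⟨w, hz, hwl, fun y hy => ?_⟩
  by_contra hlt
  push Not at hlt
  have : y ≤ w := hmax ⟨⟨hz.1.trans hy.1, hy.2⟩, hlt.le⟩
  have : y = w := le_antisymm this hy.1
  subst this
  linarith

theorem excursion_NH {X : Type*} [MetricSpace X] {f : ℝ → X} {h : ℝ → ℝ} {s t : ℝ} (hst : s < t)
    (hT : TreeOn f h 0 s t) (hL : Lip1 h s t) (he : h s = h t) (hmin : ∀ x ∈ Icc s t, h s ≤ h x) :
    f s = f t ∧ NH f s t := by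
  have hz : ∀ x y, s ≤ x → x ≤ y → y ≤ t → ∀ l, (∀ z ∈ Icc x y, l ≤ h z) → 
      dist (f x) (f y) ≤ h x + h y - 2 * l := by
    intro x y h1 h2 h3 l hl
    obtain ⟨m, hm, hd⟩ := hT x y h1 h2 h3
    have := hl m hm
    linarith
  have hst' : f s = f t := by
    apply dist_le_zero.1
    have := hz s t le_rfl hst.le le_rfl (h s) hmin
    linarith
  refine ⟨hst', ?_⟩
  have hex : ∀ p : ℝ × ℝ, ∃ z, p ∈ Icc s t ×ˢ Icc (0:ℝ) 1 → z ∈ Icc s p.1 ∧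
      h z = (1 - p.2) * h p.1 + p.2 * h s ∧ 
      ∀ y ∈ Icc z p.1, (1 - p.2) * h p.1 + p.2 * h s ≤ h y := by
    rintro ⟨x, r⟩
    by_cases hp : (x, r) ∈ Icc s t ×ˢ Icc (0:ℝ) 1
    · have hx : x ∈ Icc s t := hp.1
      have hr : r ∈ Icc (0:ℝ) 1 := hp.2
      have := hmin x hx
      obtain ⟨z, h1, h2, h3⟩ := exists_level (l := (1 - r) * h x + r * h s) hx.1
        (hL.cont.mono (Icc_subset_Icc le_rfl hx.2))
        (by nlinarith [hr.1, hr.2]) (by nlinarith [hr.1, hr.2])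
      exact ⟨z, fun _ => ⟨h1, h2, h3⟩⟩
    · exact ⟨0, fun h => absurd h hp⟩
  choose σ hσ using hex
  have key : ∀ p ∈ Icc s t ×ˢ Icc (0:ℝ) 1, ∀ q ∈ Icc s t ×ˢ Icc (0:ℝ) 1, p.1 ≤ q.1 → 
      dist (f (σ p)) (f (σ q)) ≤ |((1 - p.2) * h p.1 + p.2 * h s) - ((1 - q.2) * h q.1 + q.2 * h s)|
        + 2 * |p.1 - q.1| := by
    intro p hp q hq hpq
    obtain ⟨⟨a1, a2⟩, a3, a4⟩ := hσ p hp
    obtain ⟨⟨b1, b2⟩, b3, b4⟩ := hσ q hq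
    have p1 : p.1 ∈ Icc s t := hp.1
    have p2 : p.2 ∈ Icc (0:ℝ) 1 := hp.2
    have q1 : q.1 ∈ Icc s t := hq.1
    set lp := (1 - p.2) * h p.1 + p.2 * h s with hlp
    set lq := (1 - q.2) * h q.1 + q.2 * h s with hlq
    have hlow : ∀ z, s ≤ z → z ≤ t → (σ p ≤ z ∨ σ q ≤ z) → (z ≤ p.1 ∨ z ≤ q.1) → (σ p ≤ z ∧ σ p ≤ z ∨ σ q ≤ z) →
        min lp lq - |p.1 - q.1| ≤ h z := by
      intro z z1 z2 z3 z4 _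
      have hab := abs_nonneg (p.1 - q.1)
      by_cases hc1 : σ q ≤ z
      · have : z ≤ q.1 := by rcases z4 with z4 | z4 <;> linarith
        have := b4 z ⟨hc1, this⟩
        have := min_le_right lp lq
        linarith
      · have hc2 : σ p ≤ z := by tauto
        have := min_le_left lp lq
        by_cases hc3 : z ≤ p.1
        · have := a4 z ⟨hc2, hc3⟩
          linarith
        · have hzq : z ≤ q.1 := by tauto
          push Not at hc3
          have h5 := hL z ⟨z1, z2⟩ p.1 p1
          rw [abs_of_pos (a := z - p.1) (by linarith)] at h5
          rw [abs_of_nonpos (a := p.1 - q.1) (by linarith)]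
          have h6 := (abs_le.1 h5).1
          have h7 := hmin p.1 p1
          have : lp ≤ h p.1 := by rw [hlp]; nlinarith [p2.1, p2.2]
          linarith
    have hmm : lp + lq - 2 * min lp lq = |lp - lq| := by
      rcases le_total lp lq with h | h
      · rw [min_eq_left h, abs_of_nonpos (by linarith)]; ring
      · rw [min_eq_right h, abs_of_nonneg (by linarith)]; ring
    have hpt : σ p ≤ t := a2.trans p1.2
    have hqt : σ q ≤ t := b2.trans q1.2
    rcases le_total (σ p) (σ q) with hh | hh
    · have := hz _ _ a1 hh hqt (min lp lq - |p.1 - q.1|) (fun z hz => hlow z (by linarith [hz.1]) 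
        (by linarith [hz.2]) (Or.inl hz.1) (Or.inr (by linarith [hz.2])) (Or.inl ⟨hz.1, hz.1⟩))
      linarith
    · have := hz _ _ b1 hh hpt (min lp lq - |p.1 - q.1|) (fun z hz => hlow z (by linarith [hz.1]) 
        (by linarith [hz.2]) (Or.inr hz.1) (Or.inl (by linarith [hz.2])) (Or.inr hz.1))
      rw [dist_comm]
      linarith
  have key2 : ∀ p ∈ Icc s t ×ˢ Icc (0:ℝ) 1, ∀ q ∈ Icc s t ×ˢ Icc (0:ℝ) 1,  
      dist (f (σ q)) (f (σ p)) ≤ |((1 - q.2) * h q.1 + q.2 * h s) - ((1 - p.2) * h p.1 + p.2 * h s)|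
        + 2 * |q.1 - p.1| := by
    intro p hp q hq
    rcases le_total p.1 q.1 with hh | hh
    · have := key p hp q hq hh
      rwa [dist_comm, abs_sub_comm, abs_sub_comm p.1] at this
    · exact key q hq p hp hh
  refine ⟨fun p => f (σ p), ?_, ?_, ?_, ?_, ?_⟩
  · intro p hp
    rw [ContinuousWithinAt, tendsto_iff_dist_tendsto_zero]
    have hcl : ContinuousOn (fun q : ℝ × ℝ => |((1 - q.2) * h q.1 + q.2 * h s) - ((1 - p.2) * h p.1 + p.2 * h s)|
        + 2 * |q.1 - p.1|) (Icc s t ×ˢ Icc (0:ℝ) 1) := by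
      have : ContinuousOn (fun q : ℝ × ℝ => h q.1) (Icc s t ×ˢ Icc (0:ℝ) 1) :=
        hL.cont.comp continuousOn_fst (fun q hq => hq.1)
      have hf1 : ContinuousOn (fun q : ℝ × ℝ => q.1) (Icc s t ×ˢ Icc (0:ℝ) 1) := continuousOn_fst
      have hf2 : ContinuousOn (fun q : ℝ × ℝ => q.2) (Icc s t ×ˢ Icc (0:ℝ) 1) := continuousOn_snd
      exact ((((continuousOn_const.sub hf2).mul this).add (hf2.mul continuousOn_const)).sub
        continuousOn_const).abs.add (continuousOn_const.mul (hf1.sub continuousOn_const).abs)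
    have h0 := hcl p hp
    rw [ContinuousWithinAt] at h0
    simp only [sub_self, abs_zero, mul_zero, add_zero] at h0
    refine squeeze_zero' (Filter.Eventually.of_forall fun _ => dist_nonneg) ?_ h0
    filter_upwards [self_mem_nhdsWithin] with q hq
    exact key2 p hp q hq
  · intro x hx
    obtain ⟨a1, a2, a3⟩ := hσ (x, 0) ⟨hx, by simp⟩
    simp only [sub_zero, one_mul, zero_mul, add_zero] at a2 a3
    have := hz _ _ a1.1 a1.2 hx.2 (h x) a3
    apply dist_le_zero.1
    simp only at this ⊢
    linarith
  · intro x hx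
    obtain ⟨a1, a2, a3⟩ := hσ (x, 1) ⟨hx, by simp⟩
    simp only [sub_self, one_mul, zero_mul, zero_add] at a2 a3
    have := hz s _ le_rfl a1.1 (a1.2.trans hx.2) (h s) (fun z hz => hmin z ⟨hz.1, hz.2.trans (a1.2.trans hx.2)⟩)
    symm
    apply dist_le_zero.1
    simp only at this ⊢
    linarith
  · intro r hr
    constructor
    · obtain ⟨a1, a2, a3⟩ := hσ (s, r) ⟨⟨le_rfl, hst.le⟩, hr⟩
      dsimp only
      rw [le_antisymm a1.2 a1.1]
    · obtain ⟨a1, a2, a3⟩ := hσ (t, r) ⟨⟨hst.le, le_rfl⟩, hr⟩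
      have e : (1 - r) * h t + r * h s = h t := by rw [he]; ring
      simp only [e] at a2 a3
      have := hz _ _ a1.1 a1.2 le_rfl (h t) a3
      apply dist_le_zero.1
      simp only at this ⊢
      linarith
  · intro p hp
    obtain ⟨a1, a2, a3⟩ := hσ p hp
    exact ⟨_, ⟨a1.1, a1.2.trans hp.1.2⟩, rfl⟩

/-- thin fillings -/
inductive Thin {X : Type*} [MetricSpace X] (f : ℝ → X) (ε : ℝ) : ℝ → ℝ → Prop
  | leaf (s t : ℝ) : s ≤ t → t - s ≤ ε → Thin f ε s t
  | node (s m t : ℝ) : Thin f ε s m → Thin f ε m t → dist (f s) (f t) ≤ ε → Thin f ε s t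

theorem Thin.le {X : Type*} [MetricSpace X] {f : ℝ → X} {ε s t : ℝ} (h : Thin f ε s t) : s ≤ t := by
  induction h with
  | leaf s t h _ => exact h
  | node s m t _ _ _ h1 h2 => exact h1.trans h2

theorem Thin.dist_le {X : Type*} [MetricSpace X] {f : ℝ → X} 
    (hf : ∀ x y, dist (f x) (f y) ≤ |x - y|) {ε s t : ℝ} (h : Thin f ε s t) : dist (f s) (f t) ≤ ε := by
  cases h with
  | leaf _ _ h h' =>
    have := hf s t
    rw [abs_of_nonpos (by linarith)] at this
    linarith
  | node _ m _ _ _ h => exact h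

theorem Lip1.glue {h1 h2 : ℝ → ℝ} {a m b : ℝ} (H1 : Lip1 h1 a m) (H2 : Lip1 h2 m b)
    (he : h1 m = h2 m) (ham : a ≤ m) (hmb : m ≤ b) : Lip1 (fun x => if x ≤ m then h1 x else h2 x) a b := by
  have key : ∀ x ∈ Icc a m, ∀ y ∈ Icc m b, |h1 x - h2 y| ≤ |x - y| := by
    intro x hx y hy
    have := H1 x hx m ⟨ham, le_rfl⟩
    have h' := H2 m ⟨le_rfl, hmb⟩ y hy
    rw [abs_of_nonpos (a := x - m) (by linarith [hx.2])] at this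
    rw [abs_of_nonpos (a := m - y) (by linarith [hy.1])] at h'
    rw [abs_of_nonpos (a := x - y) (by linarith [hx.2, hy.1])]
    rw [abs_le] at *
    constructor <;> linarith
  intro x hx y hy
  dsimp only
  split_ifs with c1 c2 c2
  · exact H1 x ⟨hx.1, c1⟩ y ⟨hy.1, c2⟩
  · exact key x ⟨hx.1, c1⟩ y ⟨by linarith, hy.2⟩
  · rw [abs_sub_comm, abs_sub_comm x]
    exact key y ⟨hy.1, c2⟩ x ⟨by linarith, hx.2⟩
  · exact H2 x ⟨by linarith, hx.2⟩ y ⟨by linarith, hy.2⟩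

theorem Thin.height {X : Type*} [MetricSpace X] {f : ℝ → X} 
    (hf : ∀ x y, dist (f x) (f y) ≤ |x - y|) {ε a b : ℝ} (h : Thin f ε a b) :
    ∀ α β, |α - β| ≤ dist (f a) (f b) → ∃ h : ℝ → ℝ, h a = α ∧ h b = β ∧ Lip1 h a b ∧
      (∀ x ∈ Icc a b, α + dist (f a) (f x) ≤ h x ∨ β + dist (f b) (f x) ≤ h x) ∧
      TreeOn f h (4 * ε) a b := by
  induction h with
  | leaf a b hab hε =>
    intro α β hαβ
    have hd := hf a b
    rw [abs_of_nonpos (by linarith)] at hd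
    have hαβ' := abs_le.1 hαβ
    have hL : Lip1 (fun x => min (α + (x - a)) (β + (b - x))) a b := by
      intro x _ y _
      dsimp only
      have e1 := abs_le.1 (le_refl |x - y|)
      rw [abs_le]
      constructor <;> rcases min_cases (α + (x - a)) (β + (b - x)) with h1 | h1 <;>
        rcases min_cases (α + (y - a)) (β + (b - y)) with h2 | h2 <;> linarith
    refine ⟨fun x => min (α + (x - a)) (β + (b - x)), ?_, ?_, hL, ?_, ?_⟩
    · dsimp only
      rw [min_eq_left] <;> linarith
    · dsimp only
      rw [min_eq_right] <;> linarith
    · intro x hx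
      dsimp only
      have h1 := hf a x
      have h2 := hf b x
      rw [abs_of_nonpos (by linarith [hx.1])] at h1
      rw [abs_of_nonneg (by linarith [hx.2])] at h2
      rcases min_cases (α + (x - a)) (β + (b - x)) with h3 | h3
      · left; linarith
      · right; linarith
    · intro x y h1 h2 h3
      refine ⟨x, ⟨le_rfl, h2⟩, ?_⟩
      have := (abs_le.1 (hL x ⟨h1, by linarith⟩ y ⟨by linarith, h3⟩)).2
      have h4 := hf x y
      rw [abs_of_nonpos (by linarith)] at h4 this
      linarith
  | node a m b h1 h2 hd ih1 ih2 =>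
    intro α β hαβ
    have ham := h1.le
    have hmb := h2.le
    have d1 := h1.dist_le hf
    have d2 := h2.dist_le hf
    have hαβ' := abs_le.1 hαβ
    have t1 := dist_triangle (f a) (f b) (f m)
    have t2 := dist_triangle (f a) (f m) (f b)
    have t3 := dist_triangle (f b) (f a) (f m)
    rw [dist_comm (f b) (f a)] at t3
    rw [dist_comm (f m) (f b)] at t2
    set μ := min (α + dist (f a) (f m)) (β + dist (f b) (f m)) with hμ
    have hμc : (μ = α + dist (f a) (f m)) ∨ (μ = β + dist (f b) (f m)) := min_choice _ _
    have hμl : μ ≤ α + dist (f a) (f m) := min_le_left _ _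
    have hμr : μ ≤ β + dist (f b) (f m) := min_le_right _ _
    obtain ⟨g1, g1a, g1m, L1, I1, T1⟩ := ih1 α μ (by rw [abs_le]; constructor <;> rcases hμc with h | h <;> linarith)
    obtain ⟨g2, g2m, g2b, L2, I2, T2⟩ := ih2 μ β (by rw [abs_le, dist_comm]; constructor <;> rcases hμc with h | h <;> linarith)
    have hr : ∀ x, m ≤ x → (if x ≤ m then g1 x else g2 x) = g2 x := by
      intro x hx
      split_ifs with h
      · rw [le_antisymm h hx, g1m, g2m]
      · rfl
    have hl : ∀ x, x ≤ m → (if x ≤ m then g1 x else g2 x) = g1 x := fun x hx => if_pos hx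
    refine ⟨fun x => if x ≤ m then g1 x else g2 x, ?_, ?_, L1.glue L2 (g1m.trans g2m.symm) ham hmb, ?_, ?_⟩
    · exact (hl a ham).trans g1a
    · exact (hr b hmb).trans g2b
    · intro x hx
      dsimp only
      have t4 := dist_triangle (f a) (f m) (f x)
      have t5 := dist_triangle (f b) (f m) (f x)
      rcases le_total x m with h | h
      · rw [hl x h]
        rcases I1 x ⟨hx.1, h⟩ with h5 | h5
        · exact Or.inl h5
        · rcases hμc with h | h
          · left; linarith
          · right; linarith
      · rw [hr x h]
        rcases I2 x ⟨h, hx.2⟩ with h5 | h5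
        · rcases hμc with h | h
          · left; linarith
          · right; linarith
        · exact Or.inr h5
    · intro x y hx hxy hy
      dsimp only
      rcases le_total y m with h | h
      · obtain ⟨z, hz, hz'⟩ := T1 x y hx hxy h
        refine ⟨z, hz, ?_⟩
        rwa [hl x (hxy.trans h), hl y h, hl z (hz.2.trans h)]
      rcases le_total m x with h' | h'
      · obtain ⟨z, hz, hz'⟩ := T2 x y h' hxy hy
        refine ⟨z, hz, ?_⟩
        rwa [hr x h', hr y h, hr z (h'.trans hz.1)]
      refine ⟨m, ⟨h', h⟩, ?_⟩
      rw [hl x h', hr y h, hl m le_rfl, g1m]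
      have t6 := dist_triangle (f x) (f m) (f y)
      have k1 : dist (f x) (f m) ≤ g1 x - μ + 2 * ε := by
        have t7 := dist_triangle (f x) (f a) (f m)
        rw [dist_comm (f x) (f a)] at t7
        have t8 := dist_nonneg (x := f a) (y := f m)
        rcases I1 x ⟨hx, h'⟩ with h5 | h5
        · linarith
        · rw [dist_comm] at h5; linarith
      have k2 : dist (f m) (f y) ≤ g2 y - μ + 2 * ε := by
        have t7 := dist_triangle (f m) (f b) (f y)
        have t8 := dist_nonneg (x := f b) (y := f m)
        rw [dist_comm (f m) (f b)] at t7
        rw [dist_comm (f m) (f b)] at d2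
        rcases I2 y ⟨h, hy⟩ with h5 | h5
        · linarith
        · linarith
      linarith

theorem tree_of_thin {X : Type*} [MetricSpace X] {f : ℝ → X} 
    (hf : ∀ x y, dist (f x) (f y) ≤ |x - y|) {a b : ℝ} (hab : a ≤ b) (hfe : f a = f b) 
    (hT : ∀ ε > 0, Thin f ε a b) : ∃ h : ℝ → ℝ, h a = 0 ∧ h b = 0 ∧ Lip1 h a b ∧ 
      (∀ x ∈ Icc a b, 0 ≤ h x) ∧ TreeOn f h 0 a b := by
  have hn : ∀ n : ℕ, ∃ h : ℝ → ℝ, h a = 0 ∧ h b = 0 ∧ Lip1 h a b ∧ 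
      (∀ x ∈ Icc a b, 0 ≤ h x) ∧ TreeOn f h (4 * (1 / ((n:ℝ) + 1))) a b := by
    intro n
    obtain ⟨h, h1, h2, h3, h4, h5⟩ := (hT (1 / ((n:ℝ) + 1)) (by positivity)).height hf 0 0 (by simp)
    refine ⟨h, h1, h2, h3, ?_, h5⟩
    intro x hx
    rcases h4 x hx with h | h
    · exact le_trans (by positivity) h
    · exact le_trans (by positivity) h
  choose g ga gb gL g0 gT using hn
  let U : Ultrafilter ℕ := Filter.hyperfilter ℕ
  have hU : (U : Filter ℕ) ≤ Filter.atTop := Nat.hyperfilter_le_atTop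
  have hlim : ∀ (s : ℕ → ℝ) (A B : ℝ), (∀ n, s n ∈ Icc A B) → ∃ l ∈ Icc A B, Filter.Tendsto s U (nhds l) := by
    intro s A B hs
    have := isCompact_iff_ultrafilter_le_nhds.1 (isCompact_Icc (a := A) (b := B)) (U.map s) 
      (by simp; exact Filter.Eventually.of_forall hs)
    exact this
  have hx : ∀ x, ∃ l, x ∈ Icc a b → Filter.Tendsto (fun n => g n x) U (nhds l) := by
    intro x
    by_cases hx : x ∈ Icc a b
    · obtain ⟨l, _, hl⟩ := hlim (fun n => g n x) 0 (b - a) (fun n => ⟨g0 n x hx, by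
        have := gL n x hx a ⟨le_rfl, hab⟩
        rw [ga, abs_of_nonneg (a := x - a) (by linarith [hx.1])] at this
        have := (abs_le.1 this).2
        linarith [hx.2]⟩)
      exact ⟨l, fun _ => hl⟩
    · exact ⟨0, fun h => absurd h hx⟩
  choose h hh using hx
  have hLL : Lip1 h a b := by
    intro x hx y hy
    exact le_of_tendsto ((hh x hx).sub (hh y hy)).abs (Filter.Eventually.of_forall fun n => gL n x hx y hy)
  refine ⟨h, ?_, ?_, hLL, ?_, ?_⟩
  · refine tendsto_nhds_unique (hh a ⟨le_rfl, hab⟩) ?_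
    simp [ga]
  · refine tendsto_nhds_unique (hh b ⟨hab, le_rfl⟩) ?_
    simp [gb]
  · intro x hx
    exact ge_of_tendsto (hh x hx) (Filter.Eventually.of_forall fun n => g0 n x hx)
  · intro x y hx hxy hy
    choose m hm hd using fun n => gT n x y hx hxy hy
    obtain ⟨l, hl, hml⟩ := hlim m x y hm
    refine ⟨l, hl, ?_⟩
    have hl' : l ∈ Icc a b := ⟨hx.trans hl.1, hl.2.trans hy⟩
    have e0 : Filter.Tendsto (fun n : ℕ => 4 * (1 / ((n:ℝ) + 1))) U (nhds 0) := by
      have := (tendsto_one_div_add_atTop_nhds_zero_nat (𝕜 := ℝ)).const_mul 4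
      rw [mul_zero] at this
      exact this.mono_left hU
    have e1 : Filter.Tendsto (fun n : ℕ => 2 * |m n - l|) U (nhds 0) := by
      have := ((hml.sub_const l).abs).const_mul 2
      simpa using this
    have e2 := ((((hh x ⟨hx, hxy.trans hy⟩).add (hh y ⟨hx.trans hxy, hy⟩)).sub 
      ((hh l hl').const_mul 2)).add e0).add e1
    rw [add_zero] at e2
    refine ge_of_tendsto e2 (Filter.Eventually.of_forall fun n => ?_)
    have := gL n (m n) ⟨hx.trans (hm n).1, (hm n).2.trans hy⟩ l hl'
    have := (abs_le.1 this).1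
    have := hd n
    linarith
theorem exists_finite_level (g : ℝ → ℝ) (a b : ℝ) (hab : a < b)
    (hg : ∀ x y, |g x - g y| ≤ |x - y|) (α β : ℝ) (hαβ : α < β) :
    ∃ r ∈ Ioo α β, {t | t ∈ Icc a b ∧ g t = r}.Finite := by
  classical
  let len : ℕ → ℝ := fun n => (b - a) / (n + 1)
  have hlen : ∀ n, 0 < len n := fun n => by
    have : 0 < b - a := by linarith
    simp only [len]; positivity
  let N : ℕ → ℝ → ENNReal := fun n r =>
    ∑ i ∈ Finset.range (n + 2), (Metric.closedBall (g (a + i * len n)) (len n)).indicator 1 r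
  have hmeas : ∀ n, Measurable (N n) := by
    intro n
    apply Finset.measurable_sum
    intro i _
    exact measurable_one.indicator Metric.isClosed_closedBall.measurableSet
  have hNbound : ∀ n, ∫⁻ r, N n r ≤ ENNReal.ofReal (4 * (b - a)) := by
    intro n
    simp only [N]
    rw [MeasureTheory.lintegral_finsetSum]
    · have : ∀ i ∈ Finset.range (n + 2), ∫⁻ r, (Metric.closedBall (g (a + i * len n)) (len n)).indicator 1 r
          = ENNReal.ofReal (2 * len n) := by
        intro i _
        rw [MeasureTheory.lintegral_indicator_one Metric.isClosed_closedBall.measurableSet,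
          Real.volume_closedBall]
      rw [Finset.sum_congr rfl this, Finset.sum_const, Finset.card_range, nsmul_eq_mul,
        ← ENNReal.ofReal_natCast, ← ENNReal.ofReal_mul (by positivity)]
      apply ENNReal.ofReal_le_ofReal
      simp only [len]
      push_cast
      rw [← mul_div_assoc, ← mul_div_assoc, div_le_iff₀ (by positivity)]
      have : (0:ℝ) ≤ n := by positivity
      nlinarith [mul_nonneg this (by linarith : (0:ℝ) ≤ b - a)]
    · intro i _
      exact measurable_one.indicator Metric.isClosed_closedBall.measurableSet
  have hfat := MeasureTheory.lintegral_liminf_le (μ := MeasureTheory.volume) hmeas (u := Filter.atTop)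
  have hfin : ∫⁻ r, Filter.liminf (fun n => N n r) Filter.atTop ≠ ⊤ := by
    refine ne_of_lt (lt_of_le_of_lt (hfat.trans ?_) (ENNReal.ofReal_lt_top (r := 4 * (b - a))))
    refine (Filter.liminf_le_liminf (Filter.Eventually.of_forall hNbound)).trans ?_
    simp
  have hae := MeasureTheory.ae_lt_top (Measurable.liminf hmeas) hfin
  have hex : ∃ r ∈ Ioo α β, Filter.liminf (fun n => N n r) Filter.atTop < ⊤ := by
    by_contra hcon
    push Not at hcon
    have : MeasureTheory.volume (Ioo α β) = 0 := by
      refine MeasureTheory.measure_mono_null (fun r hr => ?_) (MeasureTheory.ae_iff.1 hae)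
      simpa using hcon r hr
    rw [Real.volume_Ioo] at this
    simp at this
    linarith
  obtain ⟨r, hr, hrlim⟩ := hex
  refine ⟨r, hr, ?_⟩
  by_contra hinf
  have hinf : {t | t ∈ Icc a b ∧ g t = r}.Infinite := hinf
  obtain ⟨M, hM⟩ := ENNReal.exists_nat_gt hrlim.ne
  obtain ⟨F, hF, hcard⟩ := hinf.exists_subset_card_eq M
  have hfreq : ∃ᶠ n in Filter.atTop, N n r < M := Filter.frequently_lt_of_liminf_lt (by isBoundedDefault) hM
  have hsep : ∀ᶠ n : ℕ in Filter.atTop, ∀ x ∈ F, ∀ y ∈ F, x ≠ y → 2 * len n < |x - y| := by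
    rw [Filter.eventually_all_finset]
    intro x _
    rw [Filter.eventually_all_finset]
    intro y _
    by_cases hxy : x = y
    · simp [hxy]
    have : Filter.Tendsto (fun n : ℕ => 2 * len n) Filter.atTop (nhds 0) := by
      have := (tendsto_one_div_add_atTop_nhds_zero_nat (𝕜 := ℝ)).const_mul (2 * (b - a))
      rw [mul_zero] at this
      refine this.congr (fun n => ?_)
      simp only [len]; ring
    filter_upwards [this.eventually_lt_const (abs_pos.2 (sub_ne_zero.2 hxy))] with n hn _ using hn
  obtain ⟨n, hn1, hn2⟩ := (hfreq.and_eventually hsep).exists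
  have hidx : ∀ t, ∃ i : ℕ, t ∈ F → i < n + 2 ∧ |t - (a + i * len n)| ≤ len n := by
    intro t
    by_cases ht : t ∈ F
    · have htI : t ∈ Icc a b := (hF ht).1
      refine ⟨⌊(t - a) / len n⌋₊, fun _ => ?_⟩
      have h0 : 0 ≤ (t - a) / len n := div_nonneg (by linarith [htI.1]) (hlen n).le
      have h1 := Nat.floor_le h0
      have h2 := Nat.lt_floor_add_one ((t - a) / len n)
      rw [le_div_iff₀ (hlen n)] at h1
      rw [div_lt_iff₀ (hlen n)] at h2
      constructor
      · have : (⌊(t - a) / len n⌋₊ : ℝ) ≤ n + 1 := by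
          refine (Nat.floor_le h0).trans ?_
          rw [div_le_iff₀ (hlen n)]
          have : (n + 1 : ℝ) * len n = b - a := by simp only [len]; field_simp
          linarith [htI.2]
        have : ⌊(t - a) / len n⌋₊ ≤ n + 1 := by exact_mod_cast this
        omega
      · rw [abs_le]; constructor <;> linarith
    · exact ⟨0, fun h => absurd h ht⟩
  choose idx hidx using hidx
  have hinj : Set.InjOn idx F := by
    intro x hx y hy hxy
    by_contra hne
    have h1 := (hidx x hx).2
    have h2 := (hidx y hy).2
    rw [hxy] at h1
    have h3 := hn2 x hx y hy hne
    rw [abs_le] at h1 h2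
    have : |x - y| ≤ 2 * len n := by rw [abs_le]; constructor <;> linarith
    linarith
  have hge : (M : ENNReal) ≤ N n r := by
    have hsub : F.image idx ⊆ Finset.range (n + 2) := by
      intro i hi
      obtain ⟨t, ht, rfl⟩ := Finset.mem_image.1 hi
      exact Finset.mem_range.2 (hidx t ht).1
    calc (M : ENNReal) = ∑ i ∈ F.image idx, (1:ENNReal) := by
          rw [Finset.sum_const, Finset.card_image_of_injOn hinj, hcard]; simp
      _ ≤ ∑ i ∈ F.image idx, (Metric.closedBall (g (a + i * len n)) (len n)).indicator 1 r := by
          apply Finset.sum_le_sum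
          intro i hi
          obtain ⟨t, ht, rfl⟩ := Finset.mem_image.1 hi
          rw [Set.indicator_of_mem]
          · simp
          · rw [Metric.mem_closedBall, Real.dist_eq, ← (hF ht).2]
            exact (hg _ _).trans (hidx t ht).2
      _ ≤ N n r := Finset.sum_le_sum_of_subset hsub
  exact absurd hn1 (not_lt.2 hge)

theorem exists_cut {X : Type*} [MetricSpace X] {f : ℝ → X}
    (hf : ∀ x y, dist (f x) (f y) ≤ |x - y|) {a b : ℝ} (hab : a < b) {ε : ℝ} (hε : 0 < ε) :
    ∃ (P : Set X) (sgn : X → Set X), P.Finite ∧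
      (∀ x ∈ f '' Icc a b, x ∉ P → ∃ η > 0, ∀ y ∈ f '' Icc a b, dist y x < η → y ∉ P ∧ sgn y = sgn x) ∧
      (∀ x ∈ f '' Icc a b, ∀ y ∈ f '' Icc a b, sgn x = sgn y → dist x y ≤ ε) := by
  have hfc : Continuous f := by
    have : LipschitzWith 1 f := LipschitzWith.of_dist_le_mul (fun x y => by simpa [Real.dist_eq] using hf x y)
    exact this.continuous
  have hY : IsCompact (f '' Icc a b) := isCompact_Icc.image hfc
  have hr : ∀ y : X, ∃ r ∈ Ioo (0:ℝ) (ε / 2), {t | t ∈ Icc a b ∧ dist (f t) y = r}.Finite := by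
    intro y
    refine exists_finite_level (fun t => dist (f t) y) a b hab (fun s t => ?_) _ _ (by linarith)
    exact (abs_dist_sub_le _ _ _).trans (hf s t)
  choose r hr hfin using hr
  obtain ⟨t, _, ht⟩ := hY.elim_nhds_subcover (fun y => Metric.ball y (r y))
    (fun y _ => Metric.ball_mem_nhds y (hr y).1)
  refine ⟨⋃ y ∈ t, f '' {s | s ∈ Icc a b ∧ dist (f s) y = r y}, fun x => {y | y ∈ t ∧ dist x y < r y}, ?_, ?_, ?_⟩
  · exact t.finite_toSet.biUnion (fun y _ => (hfin y).image f)
  · intro x hx hxP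
    have hne : ∀ y ∈ t, dist x y ≠ r y := by
      intro y hy he
      apply hxP
      obtain ⟨s, hs, rfl⟩ := hx
      exact mem_biUnion hy ⟨s, ⟨hs, he⟩, rfl⟩
    have hev : ∀ᶠ z in nhds x, ∀ y ∈ t, dist z y ≠ r y ∧ (dist z y < r y ↔ dist x y < r y) := by
      rw [Filter.eventually_all_finset]
      intro y hy
      have hc : Filter.Tendsto (fun z => dist z y) (nhds x) (nhds (dist x y)) :=
        (continuous_id.dist continuous_const).tendsto x
      rcases lt_or_gt_of_ne (hne y hy) with h | h
      · filter_upwards [hc.eventually_lt_const h] with z hz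
        exact ⟨hz.ne, by simp [hz, h]⟩
      · filter_upwards [hc.eventually_const_lt h] with z hz
        exact ⟨hz.ne', iff_of_false (not_lt.2 hz.le) (not_lt.2 h.le)⟩
    obtain ⟨η, hη, hball⟩ := Metric.eventually_nhds_iff.1 hev
    refine ⟨η, hη, fun y hy hd => ⟨?_, ?_⟩⟩
    · intro hyP
      simp only [mem_iUnion] at hyP
      obtain ⟨w, hw, s, ⟨_, hs⟩, rfl⟩ := hyP
      exact (hball hd w hw).1 hs
    · ext w
      simp only [mem_ofPred_eq]
      constructor
      · rintro ⟨h1, h2⟩; exact ⟨h1, ((hball hd w h1).2).1 h2⟩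
      · rintro ⟨h1, h2⟩; exact ⟨h1, ((hball hd w h1).2).2 h2⟩
  · intro x hx y hy he
    have := ht hx
    simp only [mem_iUnion] at this
    obtain ⟨w, hw, hxw⟩ := this
    have h1 : w ∈ {z | z ∈ t ∧ dist x z < r z} := ⟨hw, hxw⟩
    dsimp only at he
    rw [he] at h1
    have h2 := dist_triangle_right x y w
    have h3 := (hr w).2
    have h4 : dist x w < r w := hxw
    have h5 := h1.2
    linarith

theorem exists_cover {X : Type*} [MetricSpace X] {f : ℝ → X}
    (hf : ∀ x y, dist (f x) (f y) ≤ |x - y|) {a b : ℝ} (hab : a < b) {ε : ℝ} (hε : 0 < ε) :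
    ∃ (P : Set X) (sgn : X → Set X) (ρ η : ℝ), 0 < ρ ∧ 2 * ρ ≤ ε ∧ 0 < η ∧
      (∀ p ∈ P, ∀ q ∈ P, ∀ x, dist x p < ρ → dist x q < ρ → p = q) ∧
      (∀ x ∈ f '' Icc a b, ∀ y ∈ f '' Icc a b, sgn x = sgn y → dist x y ≤ ε) ∧
      (∀ x ∈ f '' Icc a b, (∃ p ∈ P, ∀ y ∈ f '' Icc a b, dist y x < η → dist y p < ρ) ∨
        (∃ σ, ∀ y ∈ f '' Icc a b, dist y x < η → y ∉ P ∧ sgn y = σ)) := by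
  obtain ⟨P, sgn, hP, h1, h2⟩ := exists_cut hf hab hε
  have hfc : Continuous f := by
    have : LipschitzWith 1 f := LipschitzWith.of_dist_le_mul (fun x y => by simpa [Real.dist_eq] using hf x y)
    exact this.continuous
  have hY : IsCompact (f '' Icc a b) := isCompact_Icc.image hfc
  have hρ : ∀ᶠ ρ : ℝ in nhdsWithin 0 (Ioi 0), ∀ p ∈ P, ∀ q ∈ P, p ≠ q → 2 * ρ < dist p q := by
    rw [Filter.eventually_all_finite hP]
    intro p _
    rw [Filter.eventually_all_finite hP]
    intro q _
    by_cases hpq : p = q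
    · simp [hpq]
    have : Filter.Tendsto (fun ρ : ℝ => 2 * ρ) (nhds 0) (nhds (2 * 0)) := Filter.Tendsto.const_mul 2 Filter.tendsto_id
    rw [mul_zero] at this
    have := this.eventually_lt_const (dist_pos.2 hpq)
    filter_upwards [nhdsWithin_le_nhds this] with x hx _ using hx
  have hρ2 : ∀ᶠ ρ : ℝ in nhdsWithin 0 (Ioi 0), 2 * ρ < ε := by
    have : Filter.Tendsto (fun ρ : ℝ => 2 * ρ) (nhds 0) (nhds (2 * 0)) := Filter.Tendsto.const_mul 2 Filter.tendsto_id
    rw [mul_zero] at this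
    exact nhdsWithin_le_nhds (this.eventually_lt_const hε)
  obtain ⟨ρ, ⟨hρa, hρb⟩, hρc⟩ := ((hρ.and hρ2).and self_mem_nhdsWithin).exists
  have hρ0 : 0 < ρ := hρc
  have hc : ∀ z : X, ∃ η > 0, z ∈ f '' Icc a b → z ∉ P → ∀ y ∈ f '' Icc a b, dist y z < η → y ∉ P ∧ sgn y = sgn z := by
    intro z
    by_cases hz : z ∈ f '' Icc a b ∧ z ∉ P
    · obtain ⟨η, hη, h⟩ := h1 z hz.1 hz.2
      exact ⟨η, hη, fun _ _ => h⟩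
    · exact ⟨1, one_pos, fun h h' => absurd ⟨h, h'⟩ hz⟩
  choose e he0 he using hc
  classical
  obtain ⟨η, hη, hL⟩ := lebesgue_number_lemma_of_metric (ι := f '' Icc a b)
    (c := fun z => if (z : X) ∈ P then Metric.ball (z : X) ρ else Metric.ball (z : X) (e z)) hY
    (fun z => by split_ifs <;> exact Metric.isOpen_ball)
    (fun z hz => by
      refine mem_iUnion.2 ⟨⟨z, hz⟩, ?_⟩
      dsimp only
      split_ifs
      · exact Metric.mem_ball_self hρ0
      · exact Metric.mem_ball_self (he0 z))
  refine ⟨P, sgn, ρ, η, hρ0, hρb.le, hη, ?_, h2, ?_⟩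
  · intro p hp q hq x hxp hxq
    by_contra hne
    have := hρa p hp q hq hne
    have := dist_triangle_left p q x
    linarith
  · intro x hx
    obtain ⟨⟨z, hz⟩, hsub⟩ := hL x hx
    dsimp only at hsub
    split_ifs at hsub with hzP
    · exact Or.inl ⟨z, hzP, fun y _ hy => hsub hy⟩
    · exact Or.inr ⟨sgn z, fun y hy hd => he z hz hzP y hy (hsub hd)⟩
section Words

variable {A B : Type*}

/-- letters attached to an oriented edge of the bipartite graph -/
def edgeWord : A ⊕ B → A ⊕ B → List ((A × B) × Bool)
  | Sum.inl p, Sum.inr σ => [((p, σ), true)]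
  | Sum.inr σ, Sum.inl p => [((p, σ), false)]
  | Sum.inl _, Sum.inl _ => []
  | Sum.inr _, Sum.inr _ => []

/-- the word read along a walk -/
def walkWord : List (ℝ × (A ⊕ B)) → List ((A × B) × Bool)
  | [] => []
  | [_] => []
  | a :: b :: l => edgeWord a.2 b.2 ++ walkWord (b :: l)

/-- opposite kinds of vertices -/
def Opp (q q' : A ⊕ B) : Prop := q.isLeft ≠ q'.isLeft

/-- irreducible walks -/
def Irr : List (ℝ × (A ⊕ B)) → Prop
  | [] => True
  | [_] => True
  | [_, _] => True
  | a :: b :: c :: l => Opp a.2 b.2 ∧ Opp b.2 c.2 ∧ a.2 ≠ c.2 ∧ Irr (b :: c :: l)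

theorem edgeWord_opp {q q' : A ⊕ B} (h : Opp q q') : ∃ x, edgeWord q q' = [x] := by
  rcases q with p | σ <;> rcases q' with p' | σ' <;> simp [Opp, edgeWord] at h ⊢

theorem edgeWord_self (q : A ⊕ B) : edgeWord q q = [] := by
  rcases q with p | σ <;> rfl

theorem edgeWord_back (q q' : A ⊕ B) :
    FreeGroup.mk (edgeWord q q') * FreeGroup.mk (edgeWord q' q) = 1 := by
  rcases q with p | σ <;> rcases q' with p' | σ' <;> simp only [edgeWord]
  · rfl
  · rw [FreeGroup.mul_mk]
    exact FreeGroup.Red.exact.2 ⟨[], Relation.ReflTransGen.single (FreeGroup.Red.Step.not (L₁ := [])), .refl⟩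
  · rw [FreeGroup.mul_mk]
    exact FreeGroup.Red.exact.2 ⟨[], Relation.ReflTransGen.single (FreeGroup.Red.Step.not (L₁ := [])), .refl⟩
  · rfl

theorem irr_reduced : ∀ l : List (ℝ × (A ⊕ B)), Irr l → FreeGroup.IsReduced (walkWord l)
  | [], _ => by simp [walkWord]
  | [_], _ => by simp [walkWord]
  | [a, b], _ => by
    obtain ⟨_, p | σ⟩ := a <;> obtain ⟨_, p' | σ'⟩ := b <;> simp [walkWord, edgeWord]
  | a :: b :: c :: l, h => by
    have ih := irr_reduced (b :: c :: l) h.2.2.2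
    obtain ⟨_, p | σ⟩ := a <;> obtain ⟨_, p' | σ'⟩ := b <;> obtain ⟨_, p'' | σ''⟩ := c <;>
      simp [Irr, Opp, walkWord, edgeWord] at h ih ⊢
    · exact ⟨fun h1 => absurd h1 h.1, ih⟩
    · exact ⟨fun h1 => absurd h1 h.1, ih⟩

variable {X : Type*} [MetricSpace X]

/-- admissible steps of a walk -/
def WStep (f : ℝ → X) (ε : ℝ) (V : A ⊕ B → Set X) (a b : ℝ × (A ⊕ B)) : Prop :=
  Thin f ε a.1 b.1 ∧ f a.1 ∈ V a.2 ∧ f b.1 ∈ V b.2 ∧ (V a.2 ∩ V b.2).Nonempty ∧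
    (a.2 = b.2 ∨ Opp a.2 b.2)

theorem WStep.shortcut {f : ℝ → X} {ε : ℝ} {V : A ⊕ B → Set X}
    (hV : ∀ q, ∀ x ∈ V q, ∀ y ∈ V q, dist x y ≤ ε) {a b c : ℝ × (A ⊕ B)}
    (h1 : WStep f (2 * ε) V a b) (h2 : WStep f (2 * ε) V b c)
    (h : a.2 = b.2 ∨ b.2 = c.2 ∨ a.2 = c.2) :
    WStep f (2 * ε) V a c ∧ FreeGroup.mk (edgeWord a.2 b.2) * FreeGroup.mk (edgeWord b.2 c.2) =
      FreeGroup.mk (edgeWord a.2 c.2) := by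
  obtain ⟨t1, a1, b1, n1, o1⟩ := h1
  obtain ⟨t2, b2, c2, n2, o2⟩ := h2
  have hne : (V a.2 ∩ V c.2).Nonempty := by
    rcases h with h | h | h
    · rwa [h]
    · rwa [← h]
    · rw [h]; exact ⟨_, c2, c2⟩
  have ho : a.2 = c.2 ∨ Opp a.2 c.2 := by
    rcases h with h | h | h
    · rwa [h]
    · rwa [← h]
    · exact Or.inl h
  refine ⟨⟨Thin.node _ _ _ t1 t2 ?_, a1, c2, hne, ho⟩, ?_⟩
  · obtain ⟨z, z1, z2⟩ := hne
    have := hV _ _ a1 _ z1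
    have := hV _ _ z2 _ c2
    have := dist_triangle (f a.1) z (f c.1)
    linarith
  · rcases h with h | h | h
    · rw [h, edgeWord_self, ← FreeGroup.one_eq_mk, one_mul]
    · rw [h, edgeWord_self, ← FreeGroup.one_eq_mk, mul_one]
    · rw [h, edgeWord_back, edgeWord_self, ← FreeGroup.one_eq_mk]

theorem irr_or_shorten {f : ℝ → X} {ε : ℝ} {V : A ⊕ B → Set X}
    (hV : ∀ q, ∀ x ∈ V q, ∀ y ∈ V q, dist x y ≤ ε) :
    ∀ (l : List (ℝ × (A ⊕ B))) (a : ℝ × (A ⊕ B)), List.IsChain (WStep f (2 * ε) V) (a :: l) →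
      Irr (a :: l) ∨ ∃ l', l'.length < l.length ∧ List.IsChain (WStep f (2 * ε) V) (a :: l') ∧
        l'.getLastD a = l.getLastD a ∧
        FreeGroup.mk (walkWord (a :: l')) = FreeGroup.mk (walkWord (a :: l))
  | [], a, _ => Or.inl trivial
  | [b], a, _ => Or.inl trivial
  | b :: c :: l, a, h => by
    obtain ⟨h1, h2⟩ := List.isChain_cons_cons.1 h
    obtain ⟨h3, h4⟩ := List.isChain_cons_cons.1 h2
    by_cases hr : a.2 = b.2 ∨ b.2 = c.2 ∨ a.2 = c.2
    · right
      obtain ⟨k1, k2⟩ := h1.shortcut hV h3 hr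
      refine ⟨c :: l, by simp, List.isChain_cons_cons.2 ⟨k1, h4⟩, by simp, ?_⟩
      simp only [walkWord, ← FreeGroup.mul_mk]
      rw [← k2, mul_assoc]
    · push Not at hr
      rcases irr_or_shorten hV (c :: l) b h2 with h5 | ⟨l', hl, hch, hlast, hw⟩
      · left
        exact ⟨h1.2.2.2.2.resolve_left hr.1, h3.2.2.2.2.resolve_left hr.2.1, hr.2.2, h5⟩
      · right
        refine ⟨b :: l', by simpa using hl, List.isChain_cons_cons.2 ⟨h1, hch⟩, ?_, ?_⟩
        · simp only [List.getLastD_cons] at hlast ⊢; exact hlast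
        · simp only [walkWord, ← FreeGroup.mul_mk] at hw ⊢
          rw [hw]

theorem thin_of_walk {f : ℝ → X} {ε : ℝ} (hε : 0 ≤ ε) {V : A ⊕ B → Set X}
    (hV : ∀ q, ∀ x ∈ V q, ∀ y ∈ V q, dist x y ≤ ε) :
    ∀ (n : ℕ) (l : List (ℝ × (A ⊕ B))) (a : ℝ × (A ⊕ B)), l.length ≤ n →
      List.IsChain (WStep f (2 * ε) V) (a :: l) →
      FreeGroup.mk (walkWord (a :: l)) = 1 → Thin f (2 * ε) a.1 (l.getLastD a).1 := by
  classical
  intro n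
  induction n with
  | zero =>
    intro l a hl _ _
    have : l = [] := List.length_eq_zero_iff.1 (by omega)
    subst this
    exact Thin.leaf _ _ le_rfl (by simpa using hε)
  | succ n ih =>
    intro l a hl hch hw
    rcases irr_or_shorten hV l a hch with h | ⟨l', h1, h2, h3, h4⟩
    · match l, h, hch, hw with
      | [], _, _, _ => exact Thin.leaf _ _ le_rfl (by simpa using hε)
      | [b], _, hch, _ =>
        exact (List.isChain_cons_cons.1 hch).1.1
      | b :: c :: l, h, _, hw =>
        exfalso
        have hred := irr_reduced _ h
        obtain ⟨x, hx⟩ := edgeWord_opp h.1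
        rw [FreeGroup.one_eq_mk] at hw
        have := FreeGroup.reduce.sound hw
        rw [hred.reduce_eq] at this
        simp [walkWord, hx] at this
    · rw [← h3]
      exact ih l' a (by omega) h2 (h4.trans hw)

end Words

/-- products -/
def prodN {G : Type*} [Group G] : (ℕ → G) → ℕ → G
  | _, 0 => 1
  | a, n + 1 => a 0 * prodN (fun i => a (i + 1)) n

theorem prodN_ladder {G : Type*} [Group G] : ∀ (n : ℕ) (a a' b : ℕ → G),
    (∀ i < n, a i * b (i + 1) = b i * a' i) → prodN a n * b n = b 0 * prodN a' n
  | 0, a, a', b, _ => by simp [prodN]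
  | n + 1, a, a', b, h => by
    have ih := prodN_ladder n (fun i => a (i + 1)) (fun i => a' (i + 1)) (fun i => b (i + 1))
      (fun i hi => h (i + 1) (by omega))
    simp only [prodN, mul_assoc]
    rw [ih, ← mul_assoc, h 0 (by omega), mul_assoc]

theorem prodN_one {G : Type*} [Group G] : ∀ (n : ℕ) (a : ℕ → G), (∀ i < n, a i = 1) → prodN a n = 1
  | 0, _, _ => rfl
  | n + 1, a, h => by
    simp only [prodN]
    rw [h 0 (by omega), prodN_one n _ (fun i hi => h (i + 1) (by omega)), one_mul]

theorem exists_cocycle {X : Type*} [MetricSpace X] {f : ℝ → X}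
    (hf : ∀ x y, dist (f x) (f y) ≤ |x - y|) {a b : ℝ} (hab : a < b) {ε : ℝ} (hε : 0 < ε) :
    ∃ (g : X → X → FreeGroup (X × Set X)) (η : ℝ), 0 < η ∧ (∀ x, g x x = 1) ∧
      (∀ x ∈ f '' Icc a b, ∀ y ∈ f '' Icc a b, ∀ z ∈ f '' Icc a b, dist y x < η → dist z x < η →
        g x y * g y z = g x z) ∧
      (∀ (n : ℕ) (s : ℕ → ℝ), (∀ i ≤ n, s i ∈ Icc a b) →
        (∀ i < n, s i ≤ s (i + 1) ∧ s (i + 1) - s i ≤ 2 * ε ∧ dist (f (s (i + 1))) (f (s i)) < η) →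
        prodN (fun i => g (f (s i)) (f (s (i + 1)))) n = 1 → Thin f (2 * ε) (s 0) (s n)) := by
  classical
  obtain ⟨P, sgn, ρ, η, hρ, hρε, hη, hdisj, hsgn, hcov⟩ := exists_cover hf hab hε
  let st : X → X ⊕ Set X := fun x => if x ∈ P then Sum.inl x else Sum.inr (sgn x)
  let V : X ⊕ Set X → Set X := fun q => match q with
    | Sum.inl p => Metric.ball p ρ
    | Sum.inr σ => {x | x ∈ f '' Icc a b ∧ sgn x = σ}
  let ψ : X → X → FreeGroup (X × Set X) := fun p x => FreeGroup.mk (edgeWord (Sum.inl p) (st x))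
  let g : X → X → FreeGroup (X × Set X) := fun x y =>
    if h : ∃ p, p ∈ P ∧ dist x p < ρ ∧ dist y p < ρ then (ψ h.choose x)⁻¹ * ψ h.choose y else 1
  have hV : ∀ q, ∀ x ∈ V q, ∀ y ∈ V q, dist x y ≤ ε := by
    rintro (p | σ) x hx y hy
    · have h1 : dist x p < ρ := hx
      have h2 : dist y p < ρ := hy
      have := dist_triangle_right x y p
      linarith
    · exact hsgn x hx.1 y hy.1 (hx.2.trans hy.2.symm)
  have hVst : ∀ x ∈ f '' Icc a b, x ∈ V (st x) := by
    intro x hx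
    simp only [st]
    split_ifs
    · exact Metric.mem_ball_self hρ
    · exact ⟨hx, rfl⟩
  have g_p : ∀ p ∈ P, ∀ x y, dist x p < ρ → dist y p < ρ → g x y = (ψ p x)⁻¹ * ψ p y := by
    intro p hp x y hx hy
    have h : ∃ p, p ∈ P ∧ dist x p < ρ ∧ dist y p < ρ := ⟨p, hp, hx, hy⟩
    have he : h.choose = p := hdisj _ h.choose_spec.1 _ hp x h.choose_spec.2.1 hx
    simp only [g, dif_pos h, he]
  have g_st : ∀ x y, st x = st y → g x y = 1 := by
    intro x y h
    simp only [g]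
    split_ifs with h'
    · simp only [ψ, h]; exact inv_mul_cancel _
    · rfl
  have hstσ : ∀ x σ, (x ∉ P ∧ sgn x = σ) → st x = Sum.inr σ := by
    rintro x σ ⟨h1, rfl⟩
    simp only [st, if_neg h1]
  refine ⟨g, η, hη, fun x => g_st x x rfl, ?_, ?_⟩
  · intro x hx y hy z hz hyx hzx
    have hxx : dist x x < η := by simpa using hη
    rcases hcov x hx with ⟨p, hp, h⟩ | ⟨σ, h⟩
    · rw [g_p p hp x y (h x hx hxx) (h y hy hyx), g_p p hp y z (h y hy hyx) (h z hz hzx),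
        g_p p hp x z (h x hx hxx) (h z hz hzx)]
      group
    · have h1 := hstσ x σ (h x hx hxx)
      have h2 := hstσ y σ (h y hy hyx)
      have h3 := hstσ z σ (h z hz hzx)
      rw [g_st x y (h1.trans h2.symm), g_st y z (h2.trans h3.symm), g_st x z (h1.trans h3.symm), one_mul]
  · have hwalk : ∀ (n : ℕ) (s : ℕ → ℝ), (∀ i ≤ n, s i ∈ Icc a b) →
        (∀ i < n, s i ≤ s (i + 1) ∧ s (i + 1) - s i ≤ 2 * ε ∧ dist (f (s (i + 1))) (f (s i)) < η) →
        ∃ l, List.IsChain (WStep f (2 * ε) V) ((s 0, st (f (s 0))) :: l) ∧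
          l.getLastD (s 0, st (f (s 0))) = (s n, st (f (s n))) ∧
          FreeGroup.mk (walkWord ((s 0, st (f (s 0))) :: l)) =
            prodN (fun i => g (f (s i)) (f (s (i + 1)))) n := by
      intro n
      induction n with
      | zero =>
        intro s _ _
        exact ⟨[], by simp, rfl, rfl⟩
      | succ n ih =>
        intro s hs hstep
        obtain ⟨l, hl, hlast, hw⟩ := ih (fun i => s (i + 1)) (fun i hi => hs (i + 1) (by omega))
          (fun i hi => hstep (i + 1) (by omega))
        simp only [zero_add] at hl hlast hw
        obtain ⟨h01, hle, hd⟩ := hstep 0 (by omega)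
        simp only [zero_add] at h01 hle hd
        have hx0 : f (s 0) ∈ f '' Icc a b := ⟨_, hs 0 (by omega), rfl⟩
        have hx1 : f (s 1) ∈ f '' Icc a b := ⟨_, hs 1 (by omega), rfl⟩
        have hxx : dist (f (s 0)) (f (s 0)) < η := by simpa using hη
        rcases hcov _ hx0 with ⟨p, hp, h⟩ | ⟨σ, h⟩
        · have hb0 := h _ hx0 hxx
          have hb1 := h _ hx1 hd
          have hopp : ∀ x, dist x p < ρ → st x = Sum.inl p ∨ ∃ σ, st x = Sum.inr σ := by
            intro x hx
            simp only [st]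
            split_ifs with hxP
            · left
              rw [hdisj x hxP p hp x (by simpa using hρ) hx]
            · exact Or.inr ⟨_, rfl⟩
          have ho : ∀ x, dist x p < ρ → (st x = Sum.inl p ∨ Opp (st x) (Sum.inl p)) := by
            intro x hx
            rcases hopp x hx with h | ⟨σ, h⟩
            · exact Or.inl h
            · right; rw [h]; simp [Opp]
          have hψ : FreeGroup.mk (edgeWord (st (f (s 0))) (Sum.inl p)) = (ψ p (f (s 0)))⁻¹ :=
            eq_inv_of_mul_eq_one_left (edgeWord_back _ _)
          refine ⟨(s 0, Sum.inl p) :: (s 1, st (f (s 1))) :: l, ?_, ?_, ?_⟩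
          · refine List.isChain_cons_cons.2 ⟨⟨Thin.leaf _ _ le_rfl (by simp; linarith), hVst _ hx0, hb0, 
              ⟨f (s 0), hVst _ hx0, hb0⟩, ho _ hb0⟩, List.isChain_cons_cons.2 ⟨⟨Thin.leaf _ _ h01 hle, hb0,
              hVst _ hx1, ⟨f (s 1), hb1, hVst _ hx1⟩, ?_⟩, hl⟩⟩
            rcases ho _ hb1 with h | h
            · exact Or.inl h.symm
            · exact Or.inr h.symm
          · simp only [List.getLastD_cons] at hlast ⊢; exact hlast
          · simp only [walkWord, ← FreeGroup.mul_mk, prodN]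
            rw [hw, hψ, zero_add, g_p p hp _ _ hb0 hb1, mul_assoc]
        · have h1 := hstσ _ σ (h _ hx0 hxx)
          have h2 := hstσ _ σ (h _ hx1 hd)
          have h12 := h1.trans h2.symm
          refine ⟨(s 1, st (f (s 1))) :: l, ?_, ?_, ?_⟩
          · refine List.isChain_cons_cons.2 ⟨⟨Thin.leaf _ _ h01 hle, hVst _ hx0, hVst _ hx1,
              ⟨f (s 1), ?_, hVst _ hx1⟩, Or.inl h12⟩, hl⟩
            dsimp only
            rw [h12]; exact hVst _ hx1
          · simp only [List.getLastD_cons] at hlast ⊢; exact hlast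
          · simp only [walkWord, ← FreeGroup.mul_mk, prodN]
            rw [hw, zero_add, g_st _ _ h12, h12, edgeWord_self, ← FreeGroup.one_eq_mk]
    intro n s hs hstep hprod
    obtain ⟨l, hl, hlast, hw⟩ := hwalk n s hs hstep
    have := thin_of_walk hε.le hV l.length l _ le_rfl hl (hw.trans hprod)
    rw [hlast] at this
    exact this

theorem thin_of_NH {X : Type*} [MetricSpace X] {f : ℝ → X}
    (hf : ∀ x y, dist (f x) (f y) ≤ |x - y|) {a b : ℝ} (hab : a < b) (hfe : f a = f b)
    (hN : NH f a b) {ε : ℝ} (hε : 0 < ε) : Thin f ε a b := by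
  obtain ⟨H, Hc, H0, H1, Hs, Him⟩ := hN
  obtain ⟨g, η, hη, g1, gc, gT⟩ := exists_cocycle hf hab (ε := ε / 2) (by linarith)
  have hK : IsCompact (Icc a b ×ˢ Icc (0:ℝ) 1) := isCompact_Icc.prod isCompact_Icc
  have hu := hK.uniformContinuousOn_of_continuous Hc
  obtain ⟨δ, hδ, hu⟩ := Metric.uniformContinuousOn_iff.1 hu η hη
  obtain ⟨n, hn⟩ := exists_nat_gt (max ((b - a) / δ) (max (1 / δ) ((b - a) / ε)))
  have hn0 : (0:ℝ) < n := lt_of_le_of_lt (le_max_of_le_right (le_max_of_le_left (by positivity))) hn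
  have hn1 : (b - a) / n < δ := by
    rw [div_lt_iff₀ hn0]
    have := lt_of_le_of_lt (le_max_left _ _) hn
    rw [div_lt_iff₀ hδ] at this
    linarith
  have hn2 : 1 / (n:ℝ) < δ := by
    rw [div_lt_iff₀ hn0]
    have := lt_of_le_of_lt ((le_max_left _ _).trans (le_max_right _ _)) hn
    rw [div_lt_iff₀ hδ] at this
    linarith
  have hn3 : (b - a) / n ≤ ε := by
    rw [div_le_iff₀ hn0]
    have := lt_of_le_of_lt ((le_max_right _ _).trans (le_max_right _ _)) hn
    rw [div_lt_iff₀ hε] at this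
    linarith
  let s : ℕ → ℝ := fun i => a + i * ((b - a) / n)
  let r : ℕ → ℝ := fun j => j * (1 / n)
  have hba : 0 < b - a := by linarith
  have hmesh : 0 ≤ (b - a) / n := by positivity
  have hnn : (n:ℝ) * ((b - a) / n) = b - a := by field_simp
  have hsI : ∀ i ≤ n, s i ∈ Icc a b := by
    intro i hi
    have : (i:ℝ) ≤ n := by exact_mod_cast hi
    have h2 := mul_le_mul_of_nonneg_right this hmesh
    constructor
    · simp only [s]; nlinarith [mul_nonneg (Nat.cast_nonneg (α := ℝ) i) hmesh]
    · simp only [s]; linarith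
  have hrI : ∀ i ≤ n, r i ∈ Icc (0:ℝ) 1 := by
    intro i hi
    have : (i:ℝ) ≤ n := by exact_mod_cast hi
    constructor
    · simp only [r]; positivity
    · simp only [r]; rw [mul_one_div, div_le_one hn0]; exact this
  have hs0 : s 0 = a := by simp [s]
  have hsn : s n = b := by simp only [s]; linarith
  have hr0 : r 0 = 0 := by simp [r]
  have hrn : r n = 1 := by simp only [r]; field_simp
  have hsd : ∀ i, s (i + 1) - s i = (b - a) / n := by intro i; simp only [s]; push_cast; ring
  have hrd : ∀ i, r (i + 1) - r i = 1 / n := by intro i; simp only [r]; push_cast; ring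
  have hclose : ∀ i j i' j', i ≤ n → j ≤ n → i' ≤ n → j' ≤ n → (i' = i ∨ i' = i + 1) → (j' = j ∨ j' = j + 1) →
      dist (H (s i', r j')) (H (s i, r j)) < η := by
    intro i j i' j' hi hj hi' hj' h1 h2
    apply hu _ ⟨hsI i' hi', hrI j' hj'⟩ _ ⟨hsI i hi, hrI j hj⟩
    rw [Prod.dist_eq, max_lt_iff]
    constructor
    · rcases h1 with rfl | rfl
      · simpa using hδ
      · rw [Real.dist_eq, hsd, abs_of_nonneg hmesh]; exact hn1
    · rcases h2 with rfl | rfl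
      · simpa using hδ
      · rw [Real.dist_eq, hrd, abs_of_nonneg (by positivity)]; exact hn2
  have hIm : ∀ i j, i ≤ n → j ≤ n → H (s i, r j) ∈ f '' Icc a b := 
    fun i j hi hj => Him _ ⟨hsI i hi, hrI j hj⟩
  have hrow : ∀ j ≤ n, prodN (fun i => g (H (s i, r 0)) (H (s (i + 1), r 0))) n = 
      prodN (fun i => g (H (s i, r j)) (H (s (i + 1), r j))) n := by
    intro j
    induction j with
    | zero => intro _; rfl
    | succ j ih =>
      intro hj
      rw [ih (by omega)]
      have := prodN_ladder n (fun i => g (H (s i, r j)) (H (s (i + 1), r j)))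
        (fun i => g (H (s i, r (j + 1))) (H (s (i + 1), r (j + 1)))) 
        (fun i => g (H (s i, r j)) (H (s i, r (j + 1)))) (fun i hi => by
          rw [gc _ (hIm i j (by omega) (by omega)) _ (hIm (i + 1) j (by omega) (by omega)) _
            (hIm (i + 1) (j + 1) (by omega) (by omega)) (hclose _ _ _ _ (by omega) (by omega) (by omega) (by omega) (Or.inr rfl) (Or.inl rfl))
            (hclose _ _ _ _ (by omega) (by omega) (by omega) (by omega) (Or.inr rfl) (Or.inr rfl)),
            gc _ (hIm i j (by omega) (by omega)) _ (hIm i (j + 1) (by omega) (by omega)) _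
            (hIm (i + 1) (j + 1) (by omega) (by omega)) (hclose _ _ _ _ (by omega) (by omega) (by omega) (by omega) (Or.inl rfl) (Or.inr rfl))
            (hclose _ _ _ _ (by omega) (by omega) (by omega) (by omega) (Or.inr rfl) (Or.inr rfl))])
      simp only [hs0, hsn] at this
      rw [(Hs _ (hrI j (by omega))).1, (Hs _ (hrI j (by omega))).2, (Hs _ (hrI (j + 1) (by omega))).1,
        (Hs _ (hrI (j + 1) (by omega))).2, g1, g1, mul_one, one_mul] at this
      exact this
  have hone : prodN (fun i => g (H (s i, r n)) (H (s (i + 1), r n))) n = 1 := by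
    apply prodN_one
    intro i hi
    rw [hrn, H1 _ (hsI i (by omega)), H1 _ (hsI (i + 1) (by omega)), g1]
  have hzero : ∀ m ≤ n, ∀ k, m + k = n → prodN (fun i => g (f (s (i + k))) (f (s (i + k + 1)))) m = 
      prodN (fun i => g (H (s (i + k), r 0)) (H (s (i + k + 1), r 0))) m := by
    intro m
    induction m with
    | zero => intro _ k _; rfl
    | succ m ih =>
      intro hm k hk
      have := ih (by omega) (k + 1) (by omega)
      simp only [prodN, zero_add]
      rw [hr0, H0 _ (hsI k (by omega)), H0 _ (hsI (k + 1) (by omega))]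
      rw [hr0] at this
      simp only [add_assoc, add_comm, add_left_comm] at this ⊢
      rw [this]
  have hz := hzero n le_rfl 0 rfl
  simp only [add_zero] at hz
  have := gT n s hsI (fun i hi => ⟨by linarith [hsd i], by linarith [hsd i], by
    have := hclose i 0 (i + 1) 0 (by omega) (by omega) (by omega) (by omega) (Or.inr rfl) (Or.inl rfl)
    rwa [hr0, H0 _ (hsI i (by omega)), H0 _ (hsI (i + 1) (by omega))] at this⟩) 
    (hz.trans ((hrow n le_rfl).trans hone))
  rw [hs0, hsn] at this
  convert this using 1
  ring

section Final

variable {X : Type*} [MetricSpace X]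

theorem NH.shift {c d : ℝ → X} {u v r : ℝ} (h : ∀ t ∈ Icc u v, c t = d (t + r))
    (huv : u ≤ v) (hN : NH c u v) : NH d (u + r) (v + r) := by
  obtain ⟨H, h1, h2, h3, h4, h5⟩ := hN
  have hm : ∀ t, t ∈ Icc (u + r) (v + r) → t - r ∈ Icc u v := fun t ht =>
    ⟨by linarith [ht.1], by linarith [ht.2]⟩
  have hu := h u ⟨le_rfl, huv⟩
  have hv := h v ⟨huv, le_rfl⟩
  refine ⟨fun p => H (p.1 - r, p.2), ?_, ?_, ?_, ?_, ?_⟩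
  · refine h1.comp (by fun_prop) ?_
    rintro ⟨t, s⟩ ⟨ht, hs⟩
    exact ⟨hm t ht, hs⟩
  · intro t ht
    have := h _ (hm t ht)
    simp only [sub_add_cancel] at this
    rw [← this]
    exact h2 _ (hm t ht)
  · intro t ht
    rw [← hu]
    exact h3 _ (hm t ht)
  · intro s hs
    simp only [add_sub_cancel_right, ← hu, ← hv]
    exact h4 s hs
  · rintro ⟨t, s⟩ ⟨ht, hs⟩
    obtain ⟨x, hx, he⟩ := h5 (t - r, s) ⟨hm t ht, hs⟩
    refine ⟨x + r, ⟨by linarith [hx.1], by linarith [hx.2]⟩, ?_⟩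
    rw [← h x hx]
    exact he

theorem NH.flip {c k : ℝ → X} {u v L : ℝ} (h : ∀ t ∈ Icc u v, c t = k (L - t))
    (huv : u ≤ v) (hce : c u = c v) (hN : NH c u v) : NH k (L - v) (L - u) := by
  obtain ⟨H, h1, h2, h3, h4, h5⟩ := hN
  have hm : ∀ t, t ∈ Icc (L - v) (L - u) → L - t ∈ Icc u v := fun t ht =>
    ⟨by linarith [ht.2], by linarith [ht.1]⟩
  have hu := h u ⟨le_rfl, huv⟩
  have hv := h v ⟨huv, le_rfl⟩
  refine ⟨fun p => H (L - p.1, p.2), ?_, ?_, ?_, ?_, ?_⟩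
  · refine h1.comp (by fun_prop) ?_
    rintro ⟨t, s⟩ ⟨ht, hs⟩
    exact ⟨hm t ht, hs⟩
  · intro t ht
    have := h _ (hm t ht)
    simp only [sub_sub_cancel] at this
    rw [← this]
    exact h2 _ (hm t ht)
  · intro t ht
    rw [← hv, ← hce]
    exact h3 _ (hm t ht)
  · intro s hs
    simp only [sub_sub_cancel, ← hu, ← hv]
    exact ⟨(h4 s hs).2, (h4 s hs).1⟩
  · rintro ⟨t, s⟩ ⟨ht, hs⟩
    obtain ⟨x, hx, he⟩ := h5 (L - t, s) ⟨hm t ht, hs⟩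
    refine ⟨L - x, ⟨by linarith [hx.2], by linarith [hx.1]⟩, ?_⟩
    rw [← h x hx]
    exact he

theorem dist_le_of_var {f : ℝ → X} {s t : ℝ} (hst : s ≤ t)
    (h : eVariationOn f (Icc s t) = ENNReal.ofReal (t - s)) : dist (f s) (f t) ≤ t - s := by
  have := eVariationOn.edist_le f (s := Icc s t) (x := s) (y := t) ⟨le_rfl, hst⟩ ⟨hst, le_rfl⟩
  rw [h, edist_dist] at this
  exact (ENNReal.ofReal_le_ofReal_iff (by linarith)).1 this

theorem RPath.lip (c : RPath X) (x y : ℝ) : dist (c.toFun x) (c.toFun y) ≤ |x - y| := by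
  have key : ∀ x y, x ≤ y → dist (c.toFun x) (c.toFun y) ≤ y - x := by
    intro x y hxy
    have hcl : ∀ z, c.toFun z = c.toFun (max 0 (min z c.len)) := by
      intro z
      rcases le_total z 0 with hz | hz
      · rw [c.clamp_left z hz, max_eq_left]
        exact (min_le_left _ _).trans hz
      · rcases le_total z c.len with hz' | hz'
        · rw [min_eq_left hz', max_eq_right hz]
        · rw [min_eq_right hz', max_eq_right c.len_nonneg, c.clamp_right z hz']
    have h1 : max 0 (min x c.len) ≤ max 0 (min y c.len) :=
      max_le_max le_rfl (min_le_min hxy le_rfl)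
    have := dist_le_of_var h1 (c.arclength _ _ (le_max_left _ _) h1
      (max_le c.len_nonneg (min_le_right _ _)))
    rw [hcl x, hcl y]
    refine this.trans ?_
    have h2 := c.len_nonneg
    rcases max_cases 0 (min x c.len) with h | h <;> rcases max_cases 0 (min y c.len) with h' | h' <;>
    rcases min_cases x c.len with h3 | h3 <;> rcases min_cases y c.len with h4 | h4 <;> linarith
  rcases le_total x y with h | h
  · rw [abs_sub_comm, abs_of_nonneg (by linarith)]; exact key x y h
  · rw [dist_comm, abs_of_nonneg (by linarith)]; exact key y x h

theorem RPath.cont (c : RPath X) : Continuous c.toFun := by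
  have : LipschitzWith 1 c.toFun := by
    apply LipschitzWith.of_dist_le_mul
    intro x y
    simpa [Real.dist_eq] using c.lip x y
  exact this.continuous

theorem RPath.no_NH (c : RPath X) {u v : ℝ} (hu : 0 ≤ u) (huv : u < v) (hv : v ≤ c.len)
    (he : c.toFun u = c.toFun v) (hN : NH c.toFun u v) : False :=
  c.weaklyNormal ⟨u, v, hu, huv, hv, he, hN⟩

theorem strict_of_noexc {h : ℝ → ℝ} {u j : ℝ} (hc : ContinuousOn h (Icc u j))
    (h0 : ∀ x ∈ Icc u j, h u ≤ h x)
    (hno : ∀ s t, u ≤ s → s < t → t ≤ j → h s = h t → (∀ x ∈ Icc s t, h s ≤ h x) → False) :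
    StrictMonoOn h (Icc u j) := by
  intro x hx y hy hxy
  by_contra hle
  push Not at hle
  obtain ⟨m, hm, hmin⟩ := (isCompact_Icc (a := x) (b := y)).exists_isMinOn ⟨x, le_rfl, hxy.le⟩
    (hc.mono (Icc_subset_Icc hx.1 hy.2))
  have hmin' : ∀ z ∈ Icc x y, h m ≤ h z := fun z hz => hmin hz
  have hmx := hmin' x ⟨le_rfl, hxy.le⟩
  rcases hm.1.eq_or_lt with e | hlt
  · subst e
    exact hno x y hx.1 hxy hy.2 (le_antisymm (hmin' y ⟨hxy.le, le_rfl⟩) hle) hmin'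
  · obtain ⟨z, hz, hze, hzl⟩ := exists_level hx.1 (hc.mono (Icc_subset_Icc le_rfl hx.2))
      (h0 m ⟨hx.1.trans hm.1, hm.2.trans hy.2⟩) hmx
    refine hno z m hz.1 (by linarith [hz.2]) (hm.2.trans hy.2) hze ?_
    intro q hq
    rw [hze]
    rcases le_total q x with h1 | h1
    · exact hzl q ⟨hq.1, h1⟩
    · exact hmin' q ⟨h1, hq.2.trans hm.2⟩

theorem TreeOn.mono {f : ℝ → X} {h : ℝ → ℝ} {e u v s t : ℝ} (hT : TreeOn f h e u v)
    (hs : u ≤ s) (ht : t ≤ v) : TreeOn f h e s t :=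
  fun x y h1 h2 h3 => hT x y (hs.trans h1) h2 (h3.trans ht)

theorem Lip1.mono {h : ℝ → ℝ} {u v s t : ℝ} (hL : Lip1 h u v)
    (hs : u ≤ s) (ht : t ≤ v) : Lip1 h s t :=
  fun x hx y hy => hL x ⟨hs.trans hx.1, hx.2.trans ht⟩ y ⟨hs.trans hy.1, hy.2.trans ht⟩

theorem mirror {f : ℝ → X} (hf : ∀ x y, dist (f x) (f y) ≤ |x - y|) {u j v : ℝ}
    (huj : u < j) (hjv : j < v) (hfe : f u = f v) (hN : NH f u v)
    (h1 : ∀ s t, u ≤ s → s < t → t ≤ j → f s = f t → NH f s t → False)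
    (h2 : ∀ s t, j ≤ s → s < t → t ≤ v → f s = f t → NH f s t → False)
    (ha : ∀ s t, u ≤ s → s ≤ t → t ≤ v → eVariationOn f (Icc s t) = ENNReal.ofReal (t - s)) :
    j - u = v - j ∧ ∀ t ∈ Icc 0 (j - u), f (j - t) = f (j + t) := by
  obtain ⟨h, hu0, hv0, hL, hpos, hT⟩ := tree_of_thin hf (huj.trans hjv).le hfe
    (fun ε hε => thin_of_NH hf (huj.trans hjv) hfe hN hε)
  have hcont := hL.cont
  have hup : StrictMonoOn h (Icc u j) := by
    refine strict_of_noexc (hcont.mono (Icc_subset_Icc le_rfl hjv.le)) ?_ ?_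
    · intro x hx; rw [hu0]; exact hpos x ⟨hx.1, hx.2.trans hjv.le⟩
    · intro s t hs hst ht he hmin
      obtain ⟨e1, e2⟩ := excursion_NH hst (hT.mono hs (ht.trans hjv.le))
        (hL.mono hs (ht.trans hjv.le)) he hmin
      exact h1 s t hs hst ht e1 e2
  have hdn : StrictAntiOn h (Icc j v) := by
    have hneg : StrictMonoOn (fun x => h (-x)) (Icc (-v) (-j)) := by
      refine strict_of_noexc ?_ ?_ ?_
      · refine hcont.comp (by fun_prop) ?_
        intro x hx
        exact ⟨by linarith [hx.2], by linarith [hx.1]⟩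
      · intro x hx
        simp only [neg_neg, hv0]
        exact hpos _ ⟨by linarith [hx.2], by linarith [hx.1]⟩
      · intro s t hs hst ht he hmin
        have hmin' : ∀ x ∈ Icc (-t) (-s), h (-t) ≤ h x := by
          intro x hx
          rw [← he]
          have := hmin (-x) ⟨by linarith [hx.2], by linarith [hx.1]⟩
          simpa using this
        obtain ⟨e1, e2⟩ := excursion_NH (s := -t) (t := -s) (by linarith)
          (hT.mono (by linarith) (by linarith))
          (hL.mono (by linarith) (by linarith)) he.symm hmin'
        exact h2 (-t) (-s) (by linarith) (by linarith) (by linarith) e1 e2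
    intro x hx y hy hxy
    have := hneg (a := -y) ⟨by linarith [hy.2], by linarith [hy.1]⟩ (b := -x)
      ⟨by linarith [hx.2], by linarith [hx.1]⟩ (by linarith)
    simpa using this
  have hjm : j ∈ Icc u j := ⟨huj.le, le_rfl⟩
  have hjm' : j ∈ Icc j v := ⟨le_rfl, hjv.le⟩
  have hex : ∀ x, ∃ y, x ∈ Icc u j → y ∈ Icc j v ∧ h y = h x := by
    intro x
    by_cases hx : x ∈ Icc u j
    · have : h x ∈ Icc (h v) (h j) := ⟨by rw [hv0]; exact hpos x ⟨hx.1, hx.2.trans hjv.le⟩,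
        hup.monotoneOn hx hjm hx.2⟩
      obtain ⟨y, hy, he⟩ := intermediate_value_Icc' hjv.le
        (hcont.mono (Icc_subset_Icc huj.le le_rfl)) this
      exact ⟨y, fun _ => ⟨hy, he⟩⟩
    · exact ⟨0, fun h => absurd h hx⟩
  choose φ hφ using hex
  have hfφ : ∀ x ∈ Icc u j, f (φ x) = f x := by
    intro x hx
    obtain ⟨h3, h4⟩ := hφ x hx
    obtain ⟨m, hm, hd⟩ := hT x (φ x) hx.1 (hx.2.trans h3.1) h3.2
    have : h x ≤ h m := by
      rcases le_total m j with h5 | h5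
      · exact hup.monotoneOn hx ⟨hx.1.trans hm.1, h5⟩ hm.1
      · rw [← h4]
        exact hdn.antitoneOn ⟨h5, hm.2.trans h3.2⟩ h3 hm.2
    have h6 : dist (f x) (f (φ x)) ≤ 0 := by linarith
    exact (dist_le_zero.1 h6).symm
  have hanti : AntitoneOn φ (Icc u j) := by
    intro x hx y hy hxy
    by_contra hlt
    push Not at hlt
    have := hdn (hφ x hx).1 (hφ y hy).1 hlt
    rw [(hφ x hx).2, (hφ y hy).2] at this
    exact absurd (hup.monotoneOn hx hy hxy) (not_le.2 this)
  have hφj : φ j = j := hdn.injOn (hφ j hjm).1 hjm' (hφ j hjm).2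
  have himg : ∀ x ∈ Icc u j, φ '' Icc x j = Icc j (φ x) := by
    intro x hx
    apply Subset.antisymm
    · rintro _ ⟨z, hz, rfl⟩
      have hz' : z ∈ Icc u j := ⟨hx.1.trans hz.1, hz.2⟩
      exact ⟨(hφ z hz').1.1, hanti hx hz' hz.1⟩
    · intro y hy
      have hy' : y ∈ Icc j v := ⟨hy.1, hy.2.trans (hφ x hx).1.2⟩
      have : h y ∈ Icc (h x) (h j) := ⟨by
        rw [← (hφ x hx).2]; exact hdn.antitoneOn hy' (hφ x hx).1 hy.2,
        hdn.antitoneOn hjm' hy' hy.1⟩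
      obtain ⟨z, hz, he⟩ := intermediate_value_Icc hx.2
        (hcont.mono (Icc_subset_Icc hx.1 hjv.le)) this
      have hz' : z ∈ Icc u j := ⟨hx.1.trans hz.1, hz.2⟩
      exact ⟨z, hz, hdn.injOn (hφ z hz').1 hy' ((hφ z hz').2.trans he)⟩
  have hlen : ∀ x ∈ Icc u j, φ x = j + (j - x) := by
    intro x hx
    have e1 := eVariationOn.comp_eq_of_antitoneOn f (t := Icc x j) φ
      (hanti.mono (Icc_subset_Icc hx.1 le_rfl))
    have e2 : eVariationOn (f ∘ φ) (Icc x j) = eVariationOn f (Icc x j) :=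
      eVariationOn.eq_of_eqOn (fun z hz => hfφ z ⟨hx.1.trans hz.1, hz.2⟩)
    rw [e2, himg x hx, ha x j hx.1 hx.2 hjv.le, ha j (φ x) huj.le (hφ x hx).1.1 (hφ x hx).1.2] at e1
    have := (ENNReal.ofReal_eq_ofReal_iff (by linarith [hx.2]) (by linarith [(hφ x hx).1.1])).1 e1
    linarith
  have hum : u ∈ Icc u j := ⟨le_rfl, huj.le⟩
  have hφu : φ u = v := hdn.injOn (hφ u hum).1 ⟨hjv.le, le_rfl⟩ (by rw [(hφ u hum).2, hu0, hv0])
  refine ⟨by linarith [hlen u hum], ?_⟩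
  intro t ht
  have hm : j - t ∈ Icc u j := ⟨by linarith [ht.2], by linarith [ht.1]⟩
  rw [← hfφ _ hm, hlen _ hm]
  congr 1
  ring

theorem RPath.no_backtrack (c : RPath X) {a e : ℝ} (he : 0 < e) (h0 : 0 ≤ a - e)
    (h1 : a + e ≤ c.len) (h : ∀ t ∈ Icc 0 e, c.toFun (a - t) = c.toFun (a + t)) : False := by
  have hT : TreeOn c.toFun (fun t => e - |t - a|) 0 (a - e) (a + e) := by
    intro x y hx hxy hy
    have hl := c.lip x y
    rw [abs_sub_comm, abs_of_nonneg (by linarith)] at hl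
    dsimp only
    rcases le_total y a with hya | hya
    · refine ⟨x, ⟨le_rfl, hxy⟩, ?_⟩
      rw [abs_of_nonpos (by linarith : x - a ≤ 0), abs_of_nonpos (by linarith : y - a ≤ 0)]
      linarith
    rcases le_total a x with hxa | hxa
    · refine ⟨y, ⟨hxy, le_rfl⟩, ?_⟩
      rw [abs_of_nonneg (by linarith : 0 ≤ x - a), abs_of_nonneg (by linarith : 0 ≤ y - a)]
      linarith
    · have hr := h (y - a) ⟨by linarith, by linarith⟩
      rw [show a + (y - a) = y by ring] at hr
      have hl2 := c.lip x (a - (y - a))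
      rw [hr] at hl2
      rcases le_total x (a - (y - a)) with h3 | h3
      · refine ⟨x, ⟨le_rfl, hxy⟩, ?_⟩
        rw [abs_of_nonpos (by linarith : x - a ≤ 0), abs_of_nonneg (by linarith : 0 ≤ y - a)]
        rw [abs_of_nonpos (by linarith)] at hl2
        linarith
      · refine ⟨y, ⟨hxy, le_rfl⟩, ?_⟩
        rw [abs_of_nonpos (by linarith : x - a ≤ 0), abs_of_nonneg (by linarith : 0 ≤ y - a)]
        rw [abs_of_nonneg (by linarith)] at hl2
        linarith
  have hL : Lip1 (fun t => e - |t - a|) (a - e) (a + e) := by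
    intro x _ y _
    have := abs_abs_sub_abs_le_abs_sub (y - a) (x - a)
    rw [show y - a - (x - a) = y - x by ring, abs_sub_comm y x] at this
    simpa using this
  obtain ⟨e1, e2⟩ := excursion_NH (by linarith) hT hL (by simp) (by
    intro x hx
    have : |x - a| ≤ e := abs_le.2 ⟨by linarith [hx.1], by linarith [hx.2]⟩
    have h5 : |a - e - a| = e := by rw [show a - e - a = -e by ring, abs_neg, abs_of_pos he]
    simp only [h5]
    linarith)
  exact c.no_NH h0 (by linarith) h1 e1 e2

theorem sup_attained {F G : ℝ → X} (hF : Continuous F) (hG : Continuous G) {p q : ℝ}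
    (hp : 0 ≤ p) (hq : 0 ≤ q) (h0 : F 0 = G 0) :
    IsGreatest {b : ℝ | 0 ≤ b ∧ b ≤ p ∧ b ≤ q ∧ ∀ t ∈ Icc 0 b, F t = G t}
      (sSup {b : ℝ | 0 ≤ b ∧ b ≤ p ∧ b ≤ q ∧ ∀ t ∈ Icc 0 b, F t = G t}) := by
  set S := {b : ℝ | 0 ≤ b ∧ b ≤ p ∧ b ≤ q ∧ ∀ t ∈ Icc 0 b, F t = G t} with hS
  have hne : (0 : ℝ) ∈ S := ⟨le_rfl, hp, hq, fun t ht => by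
    rw [le_antisymm ht.2 ht.1]; exact h0⟩
  have hbd : BddAbove S := ⟨p, fun b hb => hb.2.1⟩
  refine ⟨⟨le_csSup hbd hne, csSup_le ⟨0, hne⟩ fun b hb => hb.2.1,
    csSup_le ⟨0, hne⟩ fun b hb => hb.2.2.1, ?_⟩, fun b hb => le_csSup hbd hb⟩
  intro t ht
  have hlt : ∀ t, 0 ≤ t → t < sSup S → F t = G t := by
    intro t h1 h2
    obtain ⟨b, hb, htb⟩ := exists_lt_of_lt_csSup ⟨0, hne⟩ h2
    exact hb.2.2.2 t ⟨h1, htb.le⟩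
  rcases ht.1.eq_or_lt with h | hpos
  · rw [← h]; exact h0
  have hcl : IsClosed {t | F t = G t} := isClosed_eq hF hG
  have hsub : Ico 0 t ⊆ {t | F t = G t} := fun s hs => hlt s hs.1 (hs.2.trans_le ht.2)
  have := closure_minimal hsub hcl
  rw [closure_Ico hpos.ne] at this
  exact this ⟨hpos.le, le_rfl⟩

theorem RPath.wedge_spec (c₁ c₂ : RPath X) (h0 : c₁.toFun 0 = c₂.toFun 0) :
    IsGreatest {b : ℝ | 0 ≤ b ∧ b ≤ c₁.len ∧ b ≤ c₂.len ∧
      ∀ t ∈ Icc 0 b, c₁.toFun t = c₂.toFun t} (wedgeLen c₁ c₂) :=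
  sup_attained c₁.cont c₂.cont c₁.len_nonneg c₂.len_nonneg h0

theorem RPath.cancel_spec (k c : RPath X) (h0 : k.toFun k.len = c.toFun 0) :
    IsGreatest {s : ℝ | 0 ≤ s ∧ s ≤ k.len ∧ s ≤ c.len ∧
      ∀ t ∈ Icc 0 s, k.toFun (k.len - t) = c.toFun t} (cancelAmt k c) :=
  sup_attained (F := fun t => k.toFun (k.len - t)) (k.cont.comp (by fun_prop)) c.cont
    k.len_nonneg c.len_nonneg (by simpa using h0)

theorem RPath.wedge_comm (c₁ c₂ : RPath X) : wedgeLen c₁ c₂ = wedgeLen c₂ c₁ := by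
  unfold wedgeLen
  congr 1
  ext b
  constructor <;> rintro ⟨h1, h2, h3, h4⟩ <;> exact ⟨h1, h3, h2, fun t ht => (h4 t ht).symm⟩

theorem RPath.rhoDist_comm (c₁ c₂ : RPath X) : rhoDist c₁ c₂ = rhoDist c₂ c₁ := by
  unfold rhoDist
  rw [wedge_comm c₁ c₂]
  ring

theorem RPath.ext_on {c d : RPath X} (hl : c.len = d.len)
    (h : ∀ t ∈ Icc 0 c.len, c.toFun t = d.toFun t) : c = d := by
  have hfun : c.toFun = d.toFun := by
    funext t
    have hc := c.len_nonneg
    rcases le_total t 0 with h0 | h0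
    · rw [c.clamp_left t h0, d.clamp_left t h0, h 0 ⟨le_rfl, hc⟩]
    rcases le_total t c.len with h1 | h1
    · exact h t ⟨h0, h1⟩
    · rw [c.clamp_right t h1, d.clamp_right t (hl ▸ h1), ← hl, h c.len ⟨hc, le_rfl⟩]
  cases c
  cases d
  simp only at hl hfun
  subst hl
  subst hfun
  rfl

theorem RPath.isom_lt {k c₁ c₂ m₁ m₂ : RPath X} (h1 : k.toFun k.len = c₁.toFun 0)
    (h2 : k.toFun k.len = c₂.toFun 0) (hm1 : IsCancelConcat k c₁ m₁)
    (hm2 : IsCancelConcat k c₂ m₂) (hm0 : m₁.toFun 0 = m₂.toFun 0)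
    (hlt : cancelAmt k c₁ < cancelAmt k c₂) : rhoDist m₁ m₂ = rhoDist c₁ c₂ := by
  obtain ⟨⟨a1, a2, a3, a4⟩, a5⟩ := cancel_spec k c₁ h1
  obtain ⟨⟨b1, b2, b3, b4⟩, b5⟩ := cancel_spec k c₂ h2
  obtain ⟨⟨w1, w2, w3, w4⟩, w5⟩ := wedge_spec c₁ c₂ (h1.symm.trans h2)
  obtain ⟨⟨W1, W2, W3, W4⟩, W5⟩ := wedge_spec m₁ m₂ hm0
  obtain ⟨l1, p1, q1⟩ := hm1
  obtain ⟨l2, p2, q2⟩ := hm2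
  have hw : wedgeLen c₁ c₂ = cancelAmt k c₁ := by
    apply le_antisymm
    · by_contra hcon
      push Not at hcon
      have : min (wedgeLen c₁ c₂) (cancelAmt k c₂) ≤ cancelAmt k c₁ := a5
        ⟨le_min w1 b1, (min_le_right _ _).trans b2, (min_le_left _ _).trans w2, fun t ht => by
          rw [w4 t ⟨ht.1, ht.2.trans (min_le_left _ _)⟩, b4 t ⟨ht.1, ht.2.trans (min_le_right _ _)⟩]⟩
      exact absurd this (not_le.2 (lt_min hcon hlt))
    · exact w5 ⟨a1, a3, by linarith, fun t ht => by
        rw [← a4 t ht, b4 t ⟨ht.1, by linarith [ht.2]⟩]⟩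
  have hW : wedgeLen m₁ m₂ = k.len - cancelAmt k c₂ := by
    apply le_antisymm
    · by_contra hcon
      push Not at hcon
      set e := min (wedgeLen m₁ m₂ - (k.len - cancelAmt k c₂)) (cancelAmt k c₂ - cancelAmt k c₁)
        with he
      have he0 : 0 < e := lt_min (by linarith) (by linarith)
      have he1 : e ≤ wedgeLen m₁ m₂ - (k.len - cancelAmt k c₂) := min_le_left _ _
      have he2 : e ≤ cancelAmt k c₂ - cancelAmt k c₁ := min_le_right _ _
      refine c₂.no_backtrack (a := cancelAmt k c₂) he0 (by linarith) (by linarith) ?_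
      intro t ht
      have e1 := W4 (k.len - cancelAmt k c₂ + t) ⟨by linarith [ht.1], by linarith [ht.2]⟩
      rw [p1 _ ⟨by linarith [ht.1], by linarith [ht.2]⟩, q2 _ ⟨by linarith [ht.1], by linarith [ht.2]⟩] at e1
      rw [← b4 _ ⟨by linarith [ht.2], by linarith [ht.1]⟩]
      convert e1 using 2 <;> ring
    · exact W5 ⟨by linarith, by linarith, by linarith, fun t ht => by
        rw [p1 t ⟨ht.1, by linarith [ht.2]⟩, p2 t ht]⟩
  unfold rhoDist
  rw [hw, hW, l1, l2]
  ring

theorem RPath.isom_eq {k c₁ c₂ m₁ m₂ : RPath X} (h1 : k.toFun k.len = c₁.toFun 0)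
    (h2 : k.toFun k.len = c₂.toFun 0) (hm1 : IsCancelConcat k c₁ m₁)
    (hm2 : IsCancelConcat k c₂ m₂) (hm0 : m₁.toFun 0 = m₂.toFun 0)
    (hlt : cancelAmt k c₁ = cancelAmt k c₂) : rhoDist m₁ m₂ = rhoDist c₁ c₂ := by
  obtain ⟨⟨a1, a2, a3, a4⟩, a5⟩ := cancel_spec k c₁ h1
  obtain ⟨⟨b1, b2, b3, b4⟩, b5⟩ := cancel_spec k c₂ h2
  obtain ⟨⟨w1, w2, w3, w4⟩, w5⟩ := wedge_spec c₁ c₂ (h1.symm.trans h2)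
  obtain ⟨⟨W1, W2, W3, W4⟩, W5⟩ := wedge_spec m₁ m₂ hm0
  obtain ⟨l1, p1, q1⟩ := hm1
  obtain ⟨l2, p2, q2⟩ := hm2
  rw [← hlt] at b1 b2 b3 b4 l2 p2 q2
  have hw : cancelAmt k c₁ ≤ wedgeLen c₁ c₂ := w5 ⟨a1, a3, b3, fun t ht => by
    rw [← a4 t ht, b4 t ht]⟩
  have hW : wedgeLen m₁ m₂ = k.len - cancelAmt k c₁ + (wedgeLen c₁ c₂ - cancelAmt k c₁) := by
    apply le_antisymm
    · by_contra hcon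
      push Not at hcon
      have : wedgeLen m₁ m₂ - (k.len - cancelAmt k c₁) + cancelAmt k c₁ ≤ wedgeLen c₁ c₂ := by
        refine w5 ⟨by linarith, by linarith, by linarith, fun t ht => ?_⟩
        rcases le_total t (cancelAmt k c₁) with hta | hta
        · rw [← a4 t ⟨ht.1, hta⟩, b4 t ⟨ht.1, hta⟩]
        · have e1 := W4 (k.len - cancelAmt k c₁ + (t - cancelAmt k c₁))
            ⟨by linarith, by linarith [ht.2]⟩
          rw [q1 _ ⟨by linarith, by linarith [ht.2]⟩, q2 _ ⟨by linarith, by linarith [ht.2]⟩] at e1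
          convert e1 using 2 <;> ring
      linarith
    · refine W5 ⟨by linarith, by linarith, by linarith, fun t ht => ?_⟩
      rcases le_total t (k.len - cancelAmt k c₁) with hta | hta
      · rw [p1 t ⟨ht.1, hta⟩, p2 t ⟨ht.1, hta⟩]
      · rw [q1 t ⟨hta, by linarith [ht.2]⟩, q2 t ⟨hta, by linarith [ht.2]⟩]
        exact w4 _ ⟨by linarith, by linarith [ht.2]⟩
  unfold rhoDist
  rw [hW, l1, l2]
  ring

theorem RPath.isom {k c₁ c₂ m₁ m₂ : RPath X} (h1 : k.toFun k.len = c₁.toFun 0)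
    (h2 : k.toFun k.len = c₂.toFun 0) (hm1 : IsCancelConcat k c₁ m₁)
    (hm2 : IsCancelConcat k c₂ m₂) (hm0 : m₁.toFun 0 = m₂.toFun 0) :
    rhoDist m₁ m₂ = rhoDist c₁ c₂ := by
  rcases lt_trichotomy (cancelAmt k c₁) (cancelAmt k c₂) with h | h | h
  · exact isom_lt h1 h2 hm1 hm2 hm0 h
  · exact isom_eq h1 h2 hm1 hm2 hm0 h
  · rw [rhoDist_comm m₁, rhoDist_comm c₁]
    exact isom_lt h2 h1 hm2 hm1 hm0.symm h

theorem RPath.rhoDist_self (c : RPath X) : rhoDist c c = 0 := by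
  obtain ⟨⟨w1, w2, w3, w4⟩, w5⟩ := wedge_spec c c rfl
  have := w5 ⟨c.len_nonneg, le_rfl, le_rfl, fun _ _ => rfl⟩
  unfold rhoDist
  linarith

theorem RPath.eq_of_rhoDist {c₁ c₂ : RPath X} (h0 : c₁.toFun 0 = c₂.toFun 0)
    (h : rhoDist c₁ c₂ = 0) : c₁ = c₂ := by
  obtain ⟨⟨w1, w2, w3, w4⟩, w5⟩ := wedge_spec c₁ c₂ h0
  unfold rhoDist at h
  refine ext_on (by linarith) fun t ht => w4 t ⟨ht.1, by linarith [ht.2]⟩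

theorem RPath.exists_quot (k d : RPath X) (h0 : k.toFun 0 = d.toFun 0) :
    ∃ c : RPath X, c.len = (k.len - wedgeLen k d) + (d.len - wedgeLen k d) ∧
      (∀ t, t ≤ k.len - wedgeLen k d → c.toFun t = k.toFun (k.len - t)) ∧
      (∀ t, k.len - wedgeLen k d ≤ t →
        c.toFun t = d.toFun (t - (k.len - wedgeLen k d) + wedgeLen k d)) := by
  obtain ⟨⟨w1, w2, w3, w4⟩, w5⟩ := wedge_spec k d h0
  set w := wedgeLen k d with hw
  set j := k.len - w with hj
  have hj0 : 0 ≤ j := by linarith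
  let F : ℝ → X := fun t => if t ≤ j then k.toFun (k.len - t) else d.toFun (t - j + w)
  have hF1 : ∀ t, t ≤ j → F t = k.toFun (k.len - t) := fun t ht => if_pos ht
  have hF2 : ∀ t, j ≤ t → F t = d.toFun (t - j + w) := by
    intro t ht
    rcases ht.eq_or_lt with h | h
    · rw [hF1 t h.ge, ← h]
      have := w4 w ⟨w1, le_rfl⟩
      convert this using 2 <;> rw [hj] <;> ring
    · exact if_neg (not_le.2 h)
  have hv1 : ∀ s t, 0 ≤ s → s ≤ t → t ≤ j → eVariationOn F (Icc s t) = ENNReal.ofReal (t - s) := by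
    intro s t hs hst ht
    have e1 : eVariationOn F (Icc s t) = eVariationOn (k.toFun ∘ fun x => k.len - x) (Icc s t) :=
      eVariationOn.eq_of_eqOn fun x hx => hF1 x (hx.2.trans ht)
    rw [e1, eVariationOn.comp_eq_of_antitoneOn _ _ (fun x _ y _ hxy => by
      linarith), image_const_sub_Icc,
      k.arclength _ _ (by linarith) (by linarith) (by linarith)]
    congr 1
    ring
  have hv2 : ∀ s t, j ≤ s → s ≤ t → t ≤ j + (d.len - w) →
      eVariationOn F (Icc s t) = ENNReal.ofReal (t - s) := by
    intro s t hs hst ht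
    have e1 : eVariationOn F (Icc s t) = eVariationOn (d.toFun ∘ fun x => x + (w - j)) (Icc s t) :=
      eVariationOn.eq_of_eqOn fun x hx => by
        rw [hF2 x (hs.trans hx.1)]
        simp only [Function.comp]
        congr 1
        ring
    rw [e1, eVariationOn.comp_eq_of_monotoneOn _ _ (fun x _ y _ hxy => by
      linarith), image_add_const_Icc,
      d.arclength _ _ (by linarith) (by linarith) (by linarith)]
    congr 1
    ring
  have hva : ∀ s t, 0 ≤ s → s ≤ t → t ≤ j + (d.len - w) →
      eVariationOn F (Icc s t) = ENNReal.ofReal (t - s) := by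
    intro s t hs hst ht
    rcases le_total t j with h | h
    · exact hv1 s t hs hst h
    rcases le_total j s with h' | h'
    · exact hv2 s t h' hst ht
    · have := eVariationOn.Icc_add_Icc F (s := univ) h' h (mem_univ j)
      simp only [univ_inter] at this
      rw [← this, hv1 s j hs h' le_rfl, hv2 j t le_rfl h ht,
        ← ENNReal.ofReal_add (by linarith) (by linarith)]
      congr 1
      ring
  have hlip' : ∀ x y, x ≤ y → dist (F x) (F y) ≤ y - x := by
    intro x y hxy
    have A1 : ∀ x y, x ≤ y → y ≤ j → dist (F x) (F y) ≤ y - x := by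
      intro x y hxy hy
      rw [hF1 x (hxy.trans hy), hF1 y hy]
      refine (k.lip _ _).trans (le_of_eq ?_)
      rw [show k.len - x - (k.len - y) = y - x by ring, abs_of_nonneg (by linarith)]
    have A2 : ∀ x y, x ≤ y → j ≤ x → dist (F x) (F y) ≤ y - x := by
      intro x y hxy hy
      rw [hF2 x hy, hF2 y (hy.trans hxy), dist_comm]
      refine (d.lip _ _).trans (le_of_eq ?_)
      rw [show y - j + w - (x - j + w) = y - x by ring, abs_of_nonneg (by linarith)]
    rcases le_total y j with h | h
    · exact A1 x y hxy h
    rcases le_total j x with h' | h'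
    · exact A2 x y hxy h'
    · have := dist_triangle (F x) (F j) (F y)
      linarith [A1 x j h' le_rfl, A2 j y h le_rfl]
  have hlip : ∀ x y, dist (F x) (F y) ≤ |x - y| := by
    intro x y
    rcases le_total x y with h | h
    · rw [abs_sub_comm, abs_of_nonneg (by linarith)]; exact hlip' x y h
    · rw [dist_comm, abs_of_nonneg (by linarith)]; exact hlip' y x h
  have hcont : Continuous F := by
    have : LipschitzWith 1 F := by
      apply LipschitzWith.of_dist_le_mul
      intro x y
      simpa [Real.dist_eq] using hlip x y
    exact this.continuous
  have n1 : ∀ s t, 0 ≤ s → s < t → t ≤ j → F s = F t → NH F s t → False := by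
    intro s t hs hst ht he hN
    refine k.no_NH (u := k.len - t) (v := k.len - s) (by linarith) (by linarith) (by linarith) ?_
      (NH.flip (fun x hx => hF1 x (hx.2.trans ht)) hst.le he hN)
    rw [← hF1 t ht, ← hF1 s (hst.le.trans ht), he]
  have n2 : ∀ s t, j ≤ s → s < t → t ≤ j + (d.len - w) → F s = F t → NH F s t → False := by
    intro s t hs hst ht he hN
    have hF3 : ∀ x, j ≤ x → F x = d.toFun (x + (w - j)) := by
      intro x hx
      rw [hF2 x hx]
      congr 1
      ring
    refine d.no_NH (u := s + (w - j)) (v := t + (w - j)) (by linarith) (by linarith) (by linarith) ?_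
      (NH.shift (fun x hx => hF3 x (hs.trans hx.1)) hst.le hN)
    rw [← hF3 s hs, ← hF3 t (hs.trans hst.le), he]
  refine ⟨⟨j + (d.len - w), by linarith, F, hcont.continuousOn, hva, ?_, ?_, ?_⟩, rfl, hF1, hF2⟩
  · intro t ht
    rw [hF1 t (ht.trans hj0), hF1 0 hj0, k.clamp_right _ (by linarith), sub_zero]
  · intro t ht
    rw [hF2 t (by linarith), hF2 (j + (d.len - w)) (by linarith), d.clamp_right _ (by linarith)]
    congr 1
    ring
  · rintro ⟨u, v, hu, huv, hv, he, hN⟩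
    change NH F u v at hN
    rcases le_or_gt v j with h | hvj
    · exact n1 u v hu huv h he hN
    rcases le_or_gt j u with h | huj
    · exact n2 u v h huv hv he hN
    obtain ⟨m1, m2⟩ := mirror hlip huj hvj he hN
      (fun s t h1 => n1 s t (hu.trans h1)) (fun s t h1 h2 h3 => n2 s t h1 h2 (h3.trans hv))
      (fun s t h1 h2 h3 => hva s t (hu.trans h1) h2 (h3.trans hv))
    have : w + (j - u) ≤ w := by
      refine w5 ⟨by linarith, by linarith, by linarith, fun t ht => ?_⟩
      rcases le_total t w with h | h
      · exact w4 t ⟨ht.1, h⟩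
      · have := m2 (t - w) ⟨by linarith, by linarith [ht.2]⟩
        rw [hF1 _ (by linarith), hF2 _ (by linarith)] at this
        convert this using 2
        · rw [hj]; ring
        · ring
    linarith

theorem RPath.quot_concat {k d c m : RPath X} (h0 : k.toFun 0 = d.toFun 0)
    (hl : c.len = (k.len - wedgeLen k d) + (d.len - wedgeLen k d))
    (hc1 : ∀ t, t ≤ k.len - wedgeLen k d → c.toFun t = k.toFun (k.len - t))
    (hc2 : ∀ t, k.len - wedgeLen k d ≤ t →
        c.toFun t = d.toFun (t - (k.len - wedgeLen k d) + wedgeLen k d))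
    (hm : IsCancelConcat k c m) : m = d := by
  obtain ⟨⟨w1, w2, w3, w4⟩, w5⟩ := wedge_spec k d h0
  have hk0 : k.toFun k.len = c.toFun 0 := by rw [hc1 0 (by linarith), sub_zero]
  obtain ⟨⟨a1, a2, a3, a4⟩, a5⟩ := cancel_spec k c hk0
  have ha : cancelAmt k c = k.len - wedgeLen k d := by
    apply le_antisymm
    · by_contra hcon
      push Not at hcon
      refine d.no_backtrack (a := wedgeLen k d) (e := cancelAmt k c - (k.len - wedgeLen k d))
        (by linarith) (by linarith) (by linarith) ?_
      intro t ht
      rw [← w4 _ ⟨by linarith [ht.2], by linarith [ht.1]⟩]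
      have := a4 (k.len - wedgeLen k d + t) ⟨by linarith [ht.1], by linarith [ht.2]⟩
      rw [hc2 _ (by linarith [ht.1])] at this
      convert this using 2 <;> ring
    · exact a5 ⟨by linarith, by linarith, by linarith, fun t ht => (hc1 t ht.2).symm⟩
  obtain ⟨l, p, q⟩ := hm
  rw [ha] at l p q
  have hml : m.len = d.len := by linarith
  refine ext_on hml fun t ht => ?_
  rcases le_total t (wedgeLen k d) with h | h
  · rw [p t ⟨ht.1, by linarith⟩, w4 t ⟨ht.1, h⟩]
  · rw [q t ⟨by linarith, ht.2⟩, hc2 _ (by linarith)]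
    congr 1
    ring

end Final

/-- For a length space `X` with basepoints `*` and `*'`, any ρ-path
`k` from `*'` to `*` induces an isometry `c ↦ k ⋆ c` from `(X̄, *)` onto `(X̄, *')`,
and composing this isometry with the endpoint map gives the endpoint map on
`(X̄, *)`. -/
theorem basepoint_change_isometry {X : Type*} [MetricSpace X] (hX : IsLengthSpace X)
    (base base' : X) (k : RPath X) (hk0 : k.StartsAt base') (hk1 : k.EndsAt base)
    (T : RPath X → RPath X)
    (hT : ∀ c : RPath X, c.StartsAt base →
      RPath.IsCancelConcat k c (T c) ∧ (T c).StartsAt base') :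
    -- `T` preserves distances
    (∀ c₁ c₂ : RPath X, c₁.StartsAt base → c₂.StartsAt base →
      RPath.rhoDist (T c₁) (T c₂) = RPath.rhoDist c₁ c₂) ∧
    -- `T` is injective and onto `(X̄, *')`
    (∀ c₁ c₂ : RPath X, c₁.StartsAt base → c₂.StartsAt base → T c₁ = T c₂ → c₁ = c₂) ∧
    (∀ d : RPath X, d.StartsAt base' → ∃ c : RPath X, c.StartsAt base ∧ T c = d) ∧
    -- composing with the endpoint map gives the endpoint map
    (∀ c : RPath X, c.StartsAt base →
      (T c).toFun (T c).len = c.toFun c.len) := by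

  have hs : ∀ c : RPath X, c.StartsAt base → k.toFun k.len = c.toFun 0 :=
    fun c hc => Eq.trans hk1 (Eq.symm hc)
  have hiso : ∀ c₁ c₂ : RPath X, c₁.StartsAt base → c₂.StartsAt base →
      RPath.rhoDist (T c₁) (T c₂) = RPath.rhoDist c₁ c₂ := fun c₁ c₂ h1 h2 =>
    RPath.isom (hs c₁ h1) (hs c₂ h2) (hT c₁ h1).1 (hT c₂ h2).1
      (Eq.trans (hT c₁ h1).2 (Eq.symm (hT c₂ h2).2))
  refine ⟨hiso, ?_, ?_, ?_⟩
  · intro c₁ c₂ h1 h2 he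
    refine RPath.eq_of_rhoDist ((hs c₁ h1).symm.trans (hs c₂ h2)) ?_
    rw [← hiso c₁ c₂ h1 h2, he, RPath.rhoDist_self]
  · intro d hd
    have h0 : k.toFun 0 = d.toFun 0 := Eq.trans hk0 (Eq.symm hd)
    obtain ⟨c, hl, hc1, hc2⟩ := RPath.exists_quot k d h0
    have hw := (RPath.wedge_spec k d h0).1.2.1
    have hc : c.StartsAt base := by
      unfold RPath.StartsAt
      rw [hc1 0 (by linarith), sub_zero]
      exact hk1
    exact ⟨c, hc, RPath.quot_concat h0 hl hc1 hc2 (hT c hc).1⟩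
  · intro c hc
    obtain ⟨⟨a1, a2, a3, a4⟩, a5⟩ := RPath.cancel_spec k c (hs c hc)
    obtain ⟨l, p, q⟩ := (hT c hc).1
    rw [q _ ⟨by linarith, le_rfl⟩, l]
    congr 1
    ring
end
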